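/- arXiv:2211.01916 — 3 statements merged into one kernel-verified Lean document; each statement's English description precedes it below -/
import Mathlib

section
/- There is a universal constant C > 0 such that if the data distribution P on ℝ^d has finite second moment M₂ = E_{X∼P}‖X‖² and G_T > 1, then the forward marginal p_T satisfies KL(p_T ‖ γ_d) ≤ C·(d + M₂)·exp(−G_T). -/
open MeasureTheory Real

noncomputable section

namespace DiffusionKL

/-- Euclidean space `ℝ^d`. -/
abbrev Vec (d : ℕ) := EuclideanSpace ℝ (Fin d)

/-- Density of the isotropic Gaussian `N(m, v·I_d)` on `ℝ^d`. -/
def gaussDensity (d : ℕ) (m : Vec d) (v : ℝ) (x : Vec d) : ℝ :=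
  (2 * π * v) ^ (-(d : ℝ) / 2) * Real.exp (-‖x - m‖ ^ 2 / (2 * v))

/-- The isotropic Gaussian measure `N(m, v·I_d)` on `ℝ^d`. -/
def gaussMeasure (d : ℕ) (m : Vec d) (v : ℝ) : Measure (Vec d) :=
  MeasureTheory.volume.withDensity (fun x => ENNReal.ofReal (gaussDensity d m v x))

/-- The standard Gaussian measure `γ_d = N(0, I_d)` on `ℝ^d`. -/
def stdGauss (d : ℕ) : Measure (Vec d) := gaussMeasure d 0 1

/-- Kullback-Leibler divergence `KL(μ ‖ ν) = ∫ log (dμ/dν) dμ`. -/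
def KLdiv {d : ℕ} (μ ν : Measure (Vec d)) : ℝ :=
  ∫ x, Real.log ((μ.rnDeriv ν x).toReal) ∂μ

/-- `G_{t,s} = ∫_t^s g(u)² du`. -/
def Gvar (g : ℝ → ℝ) (t s : ℝ) : ℝ := ∫ u in t..s, (g u) ^ 2

/-- `α_{t,s} = exp(−G_{t,s}/2)`. -/
def alphaF (g : ℝ → ℝ) (t s : ℝ) : ℝ := Real.exp (-(Gvar g t s) / 2)

/-- `σ_t² = 1 − exp(−G_t)`. -/
def sigmaSq (g : ℝ → ℝ) (t : ℝ) : ℝ := 1 - Real.exp (-(Gvar g 0 t))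

/-- The law of the forward marginal `x_t = α_t X₀ + σ_t Z`, `X₀ ∼ P`, `Z ∼ N(0,I_d)` indep. -/
def forwardLaw (d : ℕ) (P : Measure (Vec d)) (g : ℝ → ℝ) (t : ℝ) : Measure (Vec d) :=
  Measure.map (fun q : Vec d × Vec d => alphaF g 0 t • q.1 + Real.sqrt (sigmaSq g t) • q.2)
    (P.prod (stdGauss d))

/-- Explicit density of the forward marginal `p_t` (for `t > 0`). -/
def forwardDensity (d : ℕ) (P : Measure (Vec d)) (g : ℝ → ℝ) (t : ℝ) (x : Vec d) : ℝ :=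
  (2 * π * sigmaSq g t) ^ (-(d : ℝ) / 2) *
    ∫ y, Real.exp (-‖x - alphaF g 0 t • y‖ ^ 2 / (2 * sigmaSq g t)) ∂P

/-- Score function `∇ log p` of a density `p`. -/
def scoreOf {d : ℕ} (p : Vec d → ℝ) (x : Vec d) : Vec d :=
  gradient (fun z => Real.log (p z)) x

/-- Score `∇ log p_t` of the forward marginal at time `t > 0`. -/
def fwdScore (d : ℕ) (P : Measure (Vec d)) (g : ℝ → ℝ) (t : ℝ) : Vec d → Vec d :=
  scoreOf (forwardDensity d P g t)

/-- Underlying measure for the joint forward coupling: `ω = (X₀, Z, Z')`. -/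
def coupleMeasure (d : ℕ) (P : Measure (Vec d)) : Measure (Vec d × Vec d × Vec d) :=
  P.prod ((stdGauss d).prod (stdGauss d))

/-- The forward process at time `t`: `x_t(ω) = α_t X₀ + σ_t Z`. -/
def xt (d : ℕ) (g : ℝ → ℝ) (t : ℝ) (ω : Vec d × Vec d × Vec d) : Vec d :=
  alphaF g 0 t • ω.1 + Real.sqrt (sigmaSq g t) • ω.2.1

/-- The forward process at time `s ≥ t`, coupled with `x_t` by
`x_s = α_{t,s} x_t + √(1−α_{t,s}²) Z'`. -/
def xts (d : ℕ) (g : ℝ → ℝ) (t s : ℝ) (ω : Vec d × Vec d × Vec d) : Vec d :=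
  alphaF g t s • xt d g t ω + Real.sqrt (1 - (alphaF g t s) ^ 2) • ω.2.2

/-- Law of a Markov chain after `n` steps, started at `init`, with transition kernels `κ`. -/
def chainLaw (d : ℕ) (init : Measure (Vec d)) (κ : ℕ → Vec d → Measure (Vec d)) :
    ℕ → Measure (Vec d)
  | 0 => init
  | k + 1 => (chainLaw d init κ k).bind (κ k)

/-- One step of the exponential-integrator sampler:
`ŷ_{k+1} | ŷ_k = a ∼ N(e^{G_{N−k}/2}·a + 2(e^{G_{N−k}/2} − 1)·s(a,t_{N−k}), (e^{G_{N−k}} − 1)·I_d)`. -/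
def EIstep (d N : ℕ) (tp : ℕ → ℝ) (g : ℝ → ℝ) (sc : Vec d → ℝ → Vec d) (k : ℕ) (a : Vec d) :
    Measure (Vec d) :=
  gaussMeasure d
    (Real.exp (Gvar g (tp (N - k - 1)) (tp (N - k)) / 2) • a +
      (2 * (Real.exp (Gvar g (tp (N - k - 1)) (tp (N - k)) / 2) - 1)) • sc a (tp (N - k)))
    (Real.exp (Gvar g (tp (N - k - 1)) (tp (N - k))) - 1)

/-- One step of the Euler–Maruyama sampler:
`ŷ_{k+1} | ŷ_k = a ∼ N((1 + G_{N−k}/2)·a + G_{N−k}·s(a,t_{N−k}), G_{N−k}·I_d)`. -/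
def EMstep (d N : ℕ) (tp : ℕ → ℝ) (g : ℝ → ℝ) (sc : Vec d → ℝ → Vec d) (k : ℕ) (a : Vec d) :
    Measure (Vec d) :=
  gaussMeasure d
    ((1 + Gvar g (tp (N - k - 1)) (tp (N - k)) / 2) • a +
      (Gvar g (tp (N - k - 1)) (tp (N - k))) • sc a (tp (N - k)))
    (Gvar g (tp (N - k - 1)) (tp (N - k)))

/-- Terminal law of the exponential-integrator sampler started at `N(0,I_d)`. -/
def EIlaw (d N : ℕ) (tp : ℕ → ℝ) (g : ℝ → ℝ) (sc : Vec d → ℝ → Vec d) : Measure (Vec d) :=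
  chainLaw d (stdGauss d) (EIstep d N tp g sc) N

/-- Terminal law of the Euler–Maruyama sampler started at `N(0,I_d)`. -/
def EMlaw (d N : ℕ) (tp : ℕ → ℝ) (g : ℝ → ℝ) (sc : Vec d → ℝ → Vec d) : Measure (Vec d) :=
  chainLaw d (stdGauss d) (EMstep d N tp g sc) N

/-- The weighted L² score estimation error
`(1/G_T)·Σ_{k=1}^N G_k·E_{p_{t_k}} ‖∇log p_{t_k}(x) − s(x,t_k)‖²`. -/
def scoreErr (d N : ℕ) (P : Measure (Vec d)) (g : ℝ → ℝ) (tp : ℕ → ℝ)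
    (sc : Vec d → ℝ → Vec d) : ℝ :=
  (1 / Gvar g 0 (tp N)) * ∑ k ∈ Finset.range N,
    Gvar g (tp k) (tp (k + 1)) *
      ∫ x, ‖fwdScore d P g (tp (k + 1)) x - sc x (tp (k + 1))‖ ^ 2
        ∂(forwardLaw d P g (tp (k + 1)))

/-- Entry `(i,j)` of the Hessian matrix `∇²f(x)`. -/
def hessEntry {d : ℕ} (f : Vec d → ℝ) (x : Vec d) (i j : Fin d) : ℝ :=
  fderiv ℝ (fun y => fderiv ℝ f y (EuclideanSpace.single j 1)) x (EuclideanSpace.single i 1)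

/-- Frobenius norm of the Hessian matrix `∇²f(x)`. -/
def hessFrob {d : ℕ} (f : Vec d → ℝ) (x : Vec d) : ℝ :=
  Real.sqrt (∑ i, ∑ j, (hessEntry f x i j) ^ 2)

/-- Density of the Gaussian perturbation `X + σZ`, `X ∼ P`, `Z ∼ N(0,I_d)`. -/
def perturbDensity (d : ℕ) (P : Measure (Vec d)) (σ : ℝ) (x : Vec d) : ℝ :=
  (2 * π * σ ^ 2) ^ (-(d : ℝ) / 2) * ∫ y, Real.exp (-‖x - y‖ ^ 2 / (2 * σ ^ 2)) ∂P

/-- Density of `μY + σZ`, `Y ∼ P`, `Z ∼ N(0,I_d)`. -/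
def perturbDensity' (d : ℕ) (P : Measure (Vec d)) (μ σ : ℝ) (x : Vec d) : ℝ :=
  (2 * π * σ ^ 2) ^ (-(d : ℝ) / 2) * ∫ y, Real.exp (-‖x - μ • y‖ ^ 2 / (2 * σ ^ 2)) ∂P

/-- Law of the Gaussian perturbation `X + σZ`. -/
def perturbLaw (d : ℕ) (P : Measure (Vec d)) (σ : ℝ) : Measure (Vec d) :=
  Measure.map (fun q : Vec d × Vec d => q.1 + σ • q.2)
    (P.prod (MeasureTheory.volume.withDensity
      (fun x : Vec d => ENNReal.ofReal ((2 * π) ^ (-(d : ℝ) / 2) * Real.exp (-‖x‖ ^ 2 / 2)))))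

/-- The tilted conditional measure `dP̃_{μ,σ}(y|x) ∝ exp(−‖x−μy‖²/(2σ²)) dP(y)`. -/
def tiltMeasure (d : ℕ) (P : Measure (Vec d)) (μ σ : ℝ) (x : Vec d) : Measure (Vec d) :=
  ((P.withDensity (fun y => ENNReal.ofReal (Real.exp (-‖x - μ • y‖ ^ 2 / (2 * σ ^ 2))))) Set.univ)⁻¹ •
    P.withDensity (fun y => ENNReal.ofReal (Real.exp (-‖x - μ • y‖ ^ 2 / (2 * σ ^ 2))))

/-- Sub-exponential (ψ₁-Orlicz) norm of `f` under the measure `μ`. -/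
def psi1Norm {α : Type*} [MeasurableSpace α] (μ : Measure α) (f : α → ℝ) : ℝ :=
  sInf {t : ℝ | 0 < t ∧ ∫ x, Real.exp (|f x| / t) ∂μ ≤ 2}

/-- Sub-Gaussian (ψ₂-Orlicz) norm of `f` under the measure `μ`. -/
def psi2Norm {α : Type*} [MeasurableSpace α] (μ : Measure α) (f : α → ℝ) : ℝ :=
  sInf {t : ℝ | 0 < t ∧ ∫ x, Real.exp ((f x) ^ 2 / t ^ 2) ∂μ ≤ 2}


/-! ### Auxiliary lemmas for the proof -/

lemma aux_gaussDensity_continuous (d : ℕ) (m : Vec d) (v : ℝ) :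
    Continuous (gaussDensity d m v) := by
  unfold gaussDensity
  fun_prop

lemma aux_gaussDensity_pos (d : ℕ) (m : Vec d) {v : ℝ} (hv : 0 < v) (x : Vec d) :
    0 < gaussDensity d m v x := by
  unfold gaussDensity
  positivity

lemma aux_gaussDensity_integrable (d : ℕ) : Integrable (gaussDensity d 0 1) := by
  have h := GaussianFourier.integrable_cexp_neg_mul_sq_norm_add (V := Vec d) (b := ((1 / 2 : ℝ) : ℂ))
    (by norm_num) 0 0
  have h2 := h.norm.const_mul ((2 * π * 1 : ℝ) ^ (-(d : ℝ) / 2))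
  refine h2.congr (Filter.Eventually.of_forall fun x => ?_)
  simp only [gaussDensity, Complex.norm_exp, sub_zero]
  congr 2
  norm_cast
  simp
  ring

instance aux_finite (d : ℕ) : IsFiniteMeasure (stdGauss d) := by
  unfold stdGauss gaussMeasure
  refine isFiniteMeasure_withDensity_ofReal (aux_gaussDensity_integrable d).2

lemma aux_stdGauss_eq (d : ℕ) :
    stdGauss d = ProbabilityTheory.stdGaussian (Vec d) := by
  refine Measure.ext_of_charFun ?_
  ext t
  rw [ProbabilityTheory.charFun_stdGaussian, charFun_apply, stdGauss, gaussMeasure,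
    integral_withDensity_eq_integral_toReal_smul
      ((aux_gaussDensity_continuous d 0 1).measurable.ennreal_ofReal)
      (Filter.Eventually.of_forall fun x => ENNReal.ofReal_lt_top)]
  have h := GaussianFourier.integral_cexp_neg_mul_sq_norm_add (V := Vec d) (b := ((1 / 2 : ℝ) : ℂ))
    (by norm_num) Complex.I t
  have e : ∀ x : Vec d, (ENNReal.ofReal (gaussDensity d 0 1 x)).toReal •
      Complex.exp (inner ℝ x t * Complex.I) =
      (((2 * π : ℝ) ^ (-(d : ℝ) / 2) : ℝ) : ℂ) *
        Complex.exp (-((1 / 2 : ℝ) : ℂ) * ‖x‖ ^ 2 + Complex.I * inner ℝ t x) := by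
    intro x
    rw [ENNReal.toReal_ofReal (aux_gaussDensity_pos d 0 one_pos x).le, gaussDensity,
      Complex.real_smul, Complex.ofReal_mul, mul_assoc, Complex.ofReal_exp, ← Complex.exp_add,
      real_inner_comm]
    congr 2
    · simp
    · push_cast
      simp
      ring
  simp_rw [e]
  rw [integral_const_mul, h, ← mul_assoc]
  have e2 : (((2 * π : ℝ) ^ (-(d : ℝ) / 2) : ℝ) : ℂ) *
      ((π : ℂ) / ((1 / 2 : ℝ) : ℂ)) ^ (Module.finrank ℝ (Vec d) / 2 : ℂ) = 1 := by
    have : ((π : ℂ) / ((1 / 2 : ℝ) : ℂ)) ^ (Module.finrank ℝ (Vec d) / 2 : ℂ)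
        = (((2 * π : ℝ) ^ ((d : ℝ) / 2) : ℝ) : ℂ) := by
      rw [Complex.ofReal_cpow (by positivity)]
      congr 1
      · push_cast; ring
      · simp
    rw [this, ← Complex.ofReal_mul, ← Real.rpow_add (by positivity)]
    simp [neg_div]
  rw [e2, one_mul, Complex.I_sq]
  congr 1
  push_cast
  ring

instance aux_prob (d : ℕ) : IsProbabilityMeasure (stdGauss d) := by
  rw [aux_stdGauss_eq]; infer_instance

instance aux_gaussian (d : ℕ) : ProbabilityTheory.IsGaussian (stdGauss d) := by
  rw [aux_stdGauss_eq]; infer_instance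

lemma aux_change (d : ℕ) (m : Vec d) {s : ℝ} (hs : 0 < s) (h : Vec d → ENNReal)
    (hh : Measurable h) :
    ∫⁻ z, h (m + s • z) ∂(stdGauss d) =
      ∫⁻ y, ENNReal.ofReal (gaussDensity d m (s ^ 2) y) * h y := by
  set F : Vec d → ENNReal := fun y => ENNReal.ofReal (gaussDensity d m (s ^ 2) y) * h y with hF
  have hFm : Measurable F :=
    (aux_gaussDensity_continuous d m (s ^ 2)).measurable.ennreal_ofReal.mul hh
  have h1 : ∫⁻ z : Vec d, F (m + s • z) = ENNReal.ofReal ((s ^ d)⁻¹) * ∫⁻ y, F y := by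
    have : ∫⁻ z : Vec d, F (m + s • z)
        = ∫⁻ y, F (m + y) ∂(Measure.map (fun z : Vec d => s • z) volume) := by
      rw [lintegral_map (by fun_prop) (by fun_prop)]
    rw [this, Measure.map_addHaar_smul _ hs.ne', lintegral_smul_measure,
      lintegral_add_left_eq_self F m, abs_of_pos (by positivity)]
    simp
  have h2 : ∀ z : Vec d, F (m + s • z) =
      ENNReal.ofReal ((s ^ d)⁻¹) * (ENNReal.ofReal (gaussDensity d 0 1 z) * h (m + s • z)) := by
    intro z
    rw [hF, ← mul_assoc, ← ENNReal.ofReal_mul (by positivity)]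
    congr 2
    simp only [gaussDensity, add_sub_cancel_left, norm_smul, sub_zero, Real.norm_eq_abs,
      abs_of_pos hs, mul_one]
    rw [Real.mul_rpow (by positivity) (by positivity), ← Real.rpow_natCast s 2, ← Real.rpow_mul
      hs.le]
    have : s ^ (((2 : ℕ) : ℝ) * (-(d : ℝ) / 2)) = (s ^ d)⁻¹ := by
      rw [show ((2 : ℕ) : ℝ) * (-(d : ℝ) / 2) = -(d : ℝ) by push_cast; ring,
        Real.rpow_neg hs.le, Real.rpow_natCast]
    rw [this, Real.rpow_natCast, show -(s * ‖z‖) ^ 2 / (2 * s ^ 2) = -‖z‖ ^ 2 / 2 by field_simp]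
    ring
  simp_rw [h2] at h1
  have hm2 : Measurable fun z : Vec d => ENNReal.ofReal (gaussDensity d 0 1 z) :=
    (aux_gaussDensity_continuous d 0 1).measurable.ennreal_ofReal
  have hm3 : Measurable fun z : Vec d =>
      ENNReal.ofReal (gaussDensity d 0 1 z) * h (m + s • z) := hm2.mul (by fun_prop)
  rw [lintegral_const_mul _ hm3] at h1
  have h3 := (ENNReal.mul_right_inj (by simpa using by positivity) ENNReal.ofReal_ne_top).1 h1
  rw [← h3, stdGauss, gaussMeasure, lintegral_withDensity_eq_lintegral_mul _ hm2 (by fun_prop)]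
  rfl

/-- Log-density ratio of `N(a x, s² I)` against `N(0, I)` at `y`. -/
def auxL (d : ℕ) (a s : ℝ) (q : Vec d × Vec d) : ℝ :=
  -(d : ℝ) / 2 * Real.log (s ^ 2) - ‖q.2 - a • q.1‖ ^ 2 / (2 * s ^ 2) + ‖q.2‖ ^ 2 / 2

lemma auxL_cont (d : ℕ) (a s : ℝ) : Continuous (auxL d a s) := by
  unfold auxL; fun_prop

lemma auxL_ratio (d : ℕ) (a : ℝ) {s : ℝ} (hs : 0 < s) (x y : Vec d) :
    gaussDensity d 0 1 y * Real.exp (auxL d a s (x, y)) = gaussDensity d (a • x) (s ^ 2) y := by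
  simp only [gaussDensity, auxL, mul_one, sub_zero]
  rw [Real.mul_rpow (x := 2 * π) (by positivity) (by positivity), Real.exp_add, Real.exp_sub,
    Real.rpow_def_of_pos (x := s ^ 2) (by positivity),
    neg_div 2 (‖y‖ ^ 2), neg_div (2 * s ^ 2), Real.exp_neg, Real.exp_neg,
    mul_comm (-(d : ℝ) / 2)]
  field_simp

/-- The joint law of `(X, aX + sZ)`. -/
def auxJoint (d : ℕ) (P : Measure (Vec d)) (a s : ℝ) : Measure (Vec d × Vec d) :=
  Measure.map (fun q : Vec d × Vec d => (q.1, a • q.1 + s • q.2)) (P.prod (stdGauss d))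

lemma auxJoint_eq (d : ℕ) (P : Measure (Vec d)) [IsProbabilityMeasure P] (a : ℝ) {s : ℝ}
    (hs : 0 < s) :
    auxJoint d P a s = (P.prod (stdGauss d)).withDensity
      (fun q => ENNReal.ofReal (Real.exp (auxL d a s q))) := by
  have hLm : Measurable (fun q => ENNReal.ofReal (Real.exp (auxL d a s q))) :=
    (Real.continuous_exp.comp (auxL_cont d a s)).measurable.ennreal_ofReal
  refine Measure.ext_of_lintegral _ fun f hf => ?_
  rw [auxJoint, lintegral_map hf (by fun_prop), lintegral_prod _ (by fun_prop),
    lintegral_withDensity_eq_lintegral_mul _ hLm hf, lintegral_prod _ (by fun_prop)]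
  refine lintegral_congr fun x => ?_
  rw [aux_change d (a • x) hs (fun y => f (x, y)) (by fun_prop)]
  have hm2 : Measurable fun z : Vec d => ENNReal.ofReal (gaussDensity d 0 1 z) :=
    (aux_gaussDensity_continuous d 0 1).measurable.ennreal_ofReal
  rw [stdGauss, gaussMeasure, lintegral_withDensity_eq_lintegral_mul _ hm2 (by fun_prop)]
  refine lintegral_congr fun y => ?_
  simp only [Pi.mul_apply]
  rw [← mul_assoc, ← ENNReal.ofReal_mul (aux_gaussDensity_pos d 0 one_pos y).le,
    auxL_ratio d a hs]

lemma aux_integral (d : ℕ) (P : Measure (Vec d)) [IsProbabilityMeasure P] (a : ℝ) {s : ℝ}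
    (hs : 0 < s) (hs1 : s ^ 2 ≤ 1) (hP : Integrable (fun x => ‖x‖ ^ 2) P) :
    Integrable (fun q : Vec d × Vec d => auxL d a s (q.1, a • q.1 + s • q.2))
      (P.prod (stdGauss d)) ∧
    ∫ q : Vec d × Vec d, auxL d a s (q.1, a • q.1 + s • q.2) ∂(P.prod (stdGauss d)) ≤
      -(d : ℝ) / 2 * Real.log (s ^ 2) + a ^ 2 / 2 * ∫ x, ‖x‖ ^ 2 ∂P := by
  have e : ∀ q : Vec d × Vec d, auxL d a s (q.1, a • q.1 + s • q.2) =
      (-(d : ℝ) / 2 * Real.log (s ^ 2) + a ^ 2 / 2 * ‖q.1‖ ^ 2) + a * s * inner ℝ q.1 q.2 +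
        (s ^ 2 - 1) / 2 * ‖q.2‖ ^ 2 := by
    intro q
    simp only [auxL, add_sub_cancel_left]
    rw [norm_add_sq_real, norm_smul, norm_smul, inner_smul_left, inner_smul_right, mul_pow,
      mul_pow, Real.norm_eq_abs, Real.norm_eq_abs, sq_abs, sq_abs]
    simp only [conj_trivial]
    field_simp
    ring
  have hZ : MemLp (fun z : Vec d => z) 2 (stdGauss d) :=
    ProbabilityTheory.IsGaussian.memLp_id _ 2 (by simp)
  have hZ2 : Integrable (fun z : Vec d => ‖z‖ ^ 2) (stdGauss d) := hZ.integrable_norm_pow (by simp)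
  have i1 : Integrable (fun q : Vec d × Vec d => ‖q.1‖ ^ 2) (P.prod (stdGauss d)) :=
    hP.comp_fst _
  have i2 : Integrable (fun q : Vec d × Vec d => ‖q.2‖ ^ 2) (P.prod (stdGauss d)) :=
    hZ2.comp_snd _
  have i3 : Integrable (fun q : Vec d × Vec d => (inner ℝ q.1 q.2 : ℝ)) (P.prod (stdGauss d)) := by
    refine (i1.add i2).mono' (by fun_prop) (Filter.Eventually.of_forall fun q => ?_)
    refine (norm_inner_le_norm _ _).trans ?_
    simp only [Pi.add_apply]
    nlinarith [sq_nonneg (‖q.1‖ - ‖q.2‖), sq_nonneg ‖q.1‖, sq_nonneg ‖q.2‖]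
  have z3 : ∫ q : Vec d × Vec d, (inner ℝ q.1 q.2 : ℝ) ∂(P.prod (stdGauss d)) = 0 := by
    rw [integral_prod _ i3]
    have : ∀ x : Vec d, ∫ z, (inner ℝ x z : ℝ) ∂(stdGauss d) = 0 := by
      intro x
      rw [integral_inner ProbabilityTheory.IsGaussian.integrable_fun_id, aux_stdGauss_eq,
        ProbabilityTheory.integral_id_stdGaussian, inner_zero_right]
    simp [this]
  simp_rw [e]
  have j1 := (integrable_const (μ := P.prod (stdGauss d)) (-(d : ℝ) / 2 * Real.log (s ^ 2))).add
    (i1.const_mul (a ^ 2 / 2))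
  have j3 := i3.const_mul (a * s)
  have j2 := i2.const_mul ((s ^ 2 - 1) / 2)
  refine ⟨(j1.add j3).add j2, ?_⟩
  have e1 := integral_add (j1.add j3) j2
  have e2 := integral_add j1 j3
  have e3 := integral_add
    (integrable_const (μ := P.prod (stdGauss d)) (-(d : ℝ) / 2 * Real.log (s ^ 2)))
    (i1.const_mul (a ^ 2 / 2))
  simp only [Pi.add_apply, integral_const_mul, z3] at e1 e2 e3
  rw [e1, e2, e3]
  have k1 : ∫ q : Vec d × Vec d, ‖q.1‖ ^ 2 ∂(P.prod (stdGauss d)) = ∫ x, ‖x‖ ^ 2 ∂P := by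
    rw [integral_fun_fst (fun x : Vec d => ‖x‖ ^ 2)]; simp
  have k2 : 0 ≤ ∫ q : Vec d × Vec d, ‖q.2‖ ^ 2 ∂(P.prod (stdGauss d)) :=
    integral_nonneg fun _ => by positivity
  rw [k1]
  simp only [integral_const, probReal_univ, smul_eq_mul, one_mul]
  nlinarith

lemma aux_KL (d : ℕ) (P : Measure (Vec d)) [IsProbabilityMeasure P] (a : ℝ) {s : ℝ}
    (hs : 0 < s) (hs1 : s ^ 2 ≤ 1) (hP : Integrable (fun x => ‖x‖ ^ 2) P) :
    KLdiv (Measure.map (fun q : Vec d × Vec d => a • q.1 + s • q.2) (P.prod (stdGauss d)))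
      (stdGauss d) ≤ -(d : ℝ) / 2 * Real.log (s ^ 2) + a ^ 2 / 2 * ∫ x, ‖x‖ ^ 2 ∂P := by
  obtain ⟨hi, hle⟩ := aux_integral d P a hs hs1 hP
  set μ := auxJoint d P a s with hμ
  set ν := P.prod (stdGauss d) with hν
  have hΦ : Measurable (fun q : Vec d × Vec d => (q.1, a • q.1 + s • q.2)) := by fun_prop
  have hLm : Measurable (fun q => ENNReal.ofReal (Real.exp (auxL d a s q))) :=
    (Real.continuous_exp.comp (auxL_cont d a s)).measurable.ennreal_ofReal
  have : IsProbabilityMeasure μ := Measure.isProbabilityMeasure_map hΦ.aemeasurable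
  have heq : μ = ν.withDensity (fun q => ENNReal.ofReal (Real.exp (auxL d a s q))) :=
    auxJoint_eq d P a hs
  have hac : μ ≪ ν := by rw [heq]; exact withDensity_absolutelyContinuous _ _
  have hllr : llr μ ν =ᵐ[μ] auxL d a s := by
    have h1 : μ.rnDeriv ν =ᵐ[ν] fun q => ENNReal.ofReal (Real.exp (auxL d a s q)) := by
      rw [heq]; exact Measure.rnDeriv_withDensity ν hLm
    filter_upwards [hac.ae_le h1] with q hq
    rw [llr, hq, ENNReal.toReal_ofReal (Real.exp_pos _).le, Real.log_exp]
  have hLi : Integrable (auxL d a s) μ :=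
    (integrable_map_measure (auxL_cont d a s).aestronglyMeasurable hΦ.aemeasurable).2 hi
  have hint : Integrable (llr μ ν) μ := hLi.congr hllr.symm
  have hfst : μ.map Prod.snd = ν.map (fun q : Vec d × Vec d => a • q.1 + s • q.2) := by
    rw [hμ, auxJoint, Measure.map_map measurable_snd hΦ]; rfl
  have hsnd : ν.map Prod.snd = stdGauss d := by
    rw [hν, Measure.map_snd_prod]; simp
  have hdp := InformationTheory.klDiv_map_le μ ν (g := Prod.snd) measurable_snd
  have hdp2 := ENNReal.toReal_mono (InformationTheory.klDiv_ne_top hac hint) hdp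
  have : IsProbabilityMeasure (μ.map Prod.snd) :=
    Measure.isProbabilityMeasure_map measurable_snd.aemeasurable
  have : IsProbabilityMeasure (ν.map Prod.snd) :=
    Measure.isProbabilityMeasure_map measurable_snd.aemeasurable
  rw [InformationTheory.toReal_klDiv_of_measure_eq (hac.map measurable_snd) (by simp),
    InformationTheory.toReal_klDiv_of_measure_eq hac (by simp), integral_congr_ae hllr,
    hfst, hsnd, hμ, auxJoint,
    integral_map hΦ.aemeasurable (auxL_cont d a s).aestronglyMeasurable] at hdp2
  exact hdp2.trans hle

/-- Lemma `converge-forward`: exponential convergence of the forward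
process to the standard Gaussian. -/
theorem statement5 :
    ∃ C : ℝ, 0 < C ∧
      ∀ (d : ℕ) (T : ℝ) (P : Measure (Vec d)) (g : ℝ → ℝ),
        IsProbabilityMeasure P →
        ContinuousOn g (Set.Icc 0 T) → (∀ t ∈ Set.Ioc (0 : ℝ) T, 0 < g t) →
        0 < T →
        Integrable (fun x => ‖x‖ ^ 2) P →
        1 < Gvar g 0 T →
        KLdiv (forwardLaw d P g T) (stdGauss d) ≤
          C * ((d : ℝ) + ∫ x, ‖x‖ ^ 2 ∂P) * Real.exp (-Gvar g 0 T) := by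
  refine ⟨1, one_pos, ?_⟩
  intro d T P g hPr _ _ _ hP hG
  set e := Real.exp (-Gvar g 0 T) with he
  have he0 : 0 < e := Real.exp_pos _
  have he1 : e < 1 / 2 := by
    have h1 : e < Real.exp (-1) := Real.exp_lt_exp.2 (by linarith)
    have h2 : Real.exp (-1) < 1 / 2 := by
      have := Real.exp_one_gt_d9
      rw [Real.exp_neg, ← one_div]
      exact one_div_lt_one_div_of_lt (by norm_num) (by linarith)
    linarith
  have hv : sigmaSq g T = 1 - e := rfl
  have hv0 : 0 < sigmaSq g T := by rw [hv]; linarith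
  have ha : alphaF g 0 T ^ 2 = e := by
    rw [alphaF, ← Real.exp_nat_mul, he]; congr 1; push_cast; ring
  have hss : Real.sqrt (sigmaSq g T) ^ 2 = 1 - e := by rw [Real.sq_sqrt hv0.le, hv]
  have key := aux_KL d P (alphaF g 0 T) (Real.sqrt_pos.2 hv0) (by rw [hss]; linarith) hP
  rw [ha, hss] at key
  have hlog : -Real.log (1 - e) ≤ 2 * e := by
    have h1 := Real.one_sub_inv_le_log_of_pos (show 0 < 1 - e by linarith)
    have h2 : (1 - e)⁻¹ ≤ 1 + 2 * e := by
      rw [inv_le_iff_one_le_mul₀ (by linarith)]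
      nlinarith
    linarith
  have hM : 0 ≤ ∫ x, ‖x‖ ^ 2 ∂P := integral_nonneg fun _ => by positivity
  have hd : (0 : ℝ) ≤ d := Nat.cast_nonneg d
  refine key.trans ?_
  nlinarith [mul_le_mul_of_nonneg_left hlog hd, mul_nonneg he0.le hM]

end DiffusionKL
end
end

section
/- For any 0 < t ≤ s ≤ T, the forward process satisfies E‖∇log p_t(x_t) − ∇log p_s(x_s)‖² ≤ 4·E‖∇log p_t(x_t) − ∇log p_t(α_{t,s}^{−1}·x_s)‖² + 2·E‖∇log p_t(x_t)‖²·(1 − α_{t,s}^{−1})², where the expectations are over the joint forward coupling of (x_t, x_s). -/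
open MeasureTheory Real

noncomputable section

namespace DiffusionKL

open ProbabilityTheory Filter Topology
open scoped ENNReal NNReal

theorem integrable_exp_sq (d : ℕ) {b : ℝ} (hb : 0 < b) :
    Integrable (fun x : Vec d => Real.exp (-b * ‖x‖ ^ 2)) := by
  by_contra h
  have h1 := GaussianFourier.integral_rexp_neg_mul_sq_norm (V := Vec d) hb
  rw [integral_undef h] at h1
  have : 0 < (π / b) ^ ((Module.finrank ℝ (Vec d) : ℝ) / 2) := by positivity
  linarith

theorem measurable_gd (d : ℕ) (m : Vec d) (v : ℝ) : Measurable (gaussDensity d m v) := by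
  unfold gaussDensity; fun_prop

theorem gd_std (d : ℕ) (x : Vec d) :
    gaussDensity d 0 1 x = (2 * π) ^ (-(d : ℝ) / 2) * Real.exp (-‖x‖ ^ 2 / 2) := by
  simp [gaussDensity]

instance finite_stdGauss (d : ℕ) : IsFiniteMeasure (stdGauss d) := by
  unfold stdGauss gaussMeasure
  apply isFiniteMeasure_withDensity_ofReal
  have : gaussDensity d 0 1 = fun x => (2 * π) ^ (-(d : ℝ) / 2) * Real.exp (-(1/2) * ‖x‖ ^ 2) := by
    ext x; rw [gd_std]; congr 2; ring
  rw [this]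
  exact ((integrable_exp_sq d (by norm_num)).const_mul _).hasFiniteIntegral

theorem integrable_stdGauss_iff (d : ℕ) (f : Vec d → ℝ) :
    Integrable f (stdGauss d) ↔ Integrable (fun x => gaussDensity d 0 1 x * f x) := by
  unfold stdGauss gaussMeasure
  rw [integrable_withDensity_iff_integrable_smul' (measurable_gd d 0 1).ennreal_ofReal
    (by simp)]
  have : ∀ x, 0 ≤ gaussDensity d 0 1 x := fun x => by rw [gd_std]; positivity
  simp [ENNReal.toReal_ofReal, this]

theorem memLp_id (d : ℕ) : MemLp (fun z : Vec d => z) 2 (stdGauss d) := by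
  rw [memLp_two_iff_integrable_sq_norm (by fun_prop), integrable_stdGauss_iff]
  refine Integrable.mono'
    (((integrable_exp_sq d (b := 1/4) (by norm_num)).const_mul (4 * (2 * π) ^ (-(d : ℝ) / 2))))
    (((measurable_gd d 0 1).mul (by fun_prop)).aestronglyMeasurable) (ae_of_all _ fun x => ?_)
  rw [gd_std, Real.norm_of_nonneg (by positivity)]
  have h1 : ‖x‖ ^ 2 / 4 ≤ Real.exp (‖x‖ ^ 2 / 4) := by
    have := Real.add_one_le_exp (‖x‖ ^ 2 / 4); linarith
  have h2 : Real.exp (-(1/4) * ‖x‖ ^ 2) = Real.exp (-‖x‖ ^ 2 / 2) * Real.exp (‖x‖ ^ 2 / 4) := by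
    rw [← Real.exp_add]; congr 1; ring
  rw [h2]
  have h3 : 0 < (2 * π) ^ (-(d : ℝ) / 2) * Real.exp (-‖x‖ ^ 2 / 2) := by positivity
  nlinarith [mul_le_mul_of_nonneg_left h1 h3.le]

theorem neg_stdGauss (d : ℕ) : (stdGauss d).map (fun z => -z) = stdGauss d := by
  refine Measure.ext_of_lintegral _ fun f hf => ?_
  rw [lintegral_map hf (by fun_prop)]
  unfold stdGauss gaussMeasure
  rw [lintegral_withDensity_eq_lintegral_mul _ (measurable_gd d 0 1).ennreal_ofReal (by fun_prop),
    lintegral_withDensity_eq_lintegral_mul _ (measurable_gd d 0 1).ennreal_ofReal hf,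
    ← lintegral_neg_eq_self]
  simp [gd_std]

theorem integral_id_stdGauss (d : ℕ) : ∫ z, z ∂(stdGauss d) = 0 := by
  have h : ∫ z, z ∂(stdGauss d) = ∫ z, -z ∂(stdGauss d) := by
    conv_lhs => rw [← neg_stdGauss d]
    rw [integral_map (by fun_prop) (by fun_prop)]
  rw [integral_neg] at h
  have h2 := eq_neg_iff_add_eq_zero.mp h
  rw [← two_smul ℝ] at h2
  exact (smul_eq_zero.mp h2).resolve_left two_ne_zero

/-- normalisation constant -/
def kap (d : ℕ) (c : ℝ) : ℝ := (2 * π) ^ (-(d : ℝ) / 2) * (c ^ d)⁻¹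

theorem kap_pos (d : ℕ) {c : ℝ} (hc : 0 < c) : 0 < kap d c := by unfold kap; positivity

/-- Gaussian factor -/
def ee (d : ℕ) (a v : ℝ) (x y : Vec d) : ℝ := Real.exp (-‖x - a • y‖ ^ 2 / (2 * v))

theorem lintegral_shift (d : ℕ) {c : ℝ} (hc : 0 < c) (m : Vec d) (f : Vec d → ℝ≥0∞)
    (hf : Measurable f) :
    ∫⁻ z, f (m + c • z) ∂(stdGauss d) =
      ∫⁻ x, ENNReal.ofReal (kap d c * Real.exp (-‖x - m‖ ^ 2 / (2 * c ^ 2))) * f x := by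
  unfold stdGauss gaussMeasure
  rw [lintegral_withDensity_eq_lintegral_mul _ (measurable_gd d 0 1).ennreal_ofReal (by fun_prop)]
  let F : Vec d → ℝ≥0∞ := fun x =>
    ENNReal.ofReal ((2 * π) ^ (-(d : ℝ) / 2) * Real.exp (-‖x - m‖ ^ 2 / (2 * c ^ 2))) * f x
  have hF : Measurable F := by unfold F; fun_prop
  have h1 : ∀ z, ((fun x => ENNReal.ofReal (gaussDensity d 0 1 x)) * fun a => f (m + c • a)) z
      = (fun u => F (m + u)) (c • z) := by
    intro z
    simp only [F, Pi.mul_apply, gd_std]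
    congr 4
    rw [add_sub_cancel_left, norm_smul, mul_pow, Real.norm_eq_abs, sq_abs]
    field_simp
  simp_rw [h1]
  rw [← lintegral_map (f := fun u => F (m + u)) (by fun_prop) (by fun_prop),
    Measure.map_addHaar_smul _ hc.ne', lintegral_smul_measure, lintegral_add_left_eq_self,
    smul_eq_mul, ← lintegral_const_mul _ hF]
  congr 1
  ext x
  simp only [F, kap]
  rw [← mul_assoc, ← ENNReal.ofReal_mul (by positivity)]
  congr 2
  rw [finrank_euclideanSpace_fin, abs_of_pos (by positivity)]
  ring

theorem map_pair (d : ℕ) (P : Measure (Vec d)) [IsProbabilityMeasure P] (a : ℝ) {c : ℝ}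
    (hc : 0 < c) :
    (P.prod (stdGauss d)).map (fun q => (q.1, a • q.1 + c • q.2)) =
      (P.prod (volume : Measure (Vec d))).withDensity
        (fun q => ENNReal.ofReal (kap d c * ee d a (c ^ 2) q.2 q.1)) := by
  have hm : Measurable fun q : Vec d × Vec d =>
      ENNReal.ofReal (kap d c * ee d a (c ^ 2) q.2 q.1) := by unfold ee; fun_prop
  refine Measure.ext_of_lintegral _ fun f hf => ?_
  rw [lintegral_map hf (by fun_prop), lintegral_withDensity_eq_lintegral_mul _ hm hf,
    lintegral_prod _ (by fun_prop), lintegral_prod _ (hm.mul hf).aemeasurable]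
  congr 1
  ext y
  exact lintegral_shift d hc (a • y) (fun x => f (y, x)) (by fun_prop)

theorem ee_pos (d : ℕ) (a v : ℝ) (x y : Vec d) : 0 < ee d a v x y := Real.exp_pos _

theorem ee_le_one (d : ℕ) (a : ℝ) {v : ℝ} (hv : 0 < v) (x y : Vec d) : ee d a v x y ≤ 1 := by
  unfold ee
  rw [Real.exp_le_one_iff, neg_div]
  have : 0 ≤ ‖x - a • y‖ ^ 2 / (2 * v) := by positivity
  linarith

theorem ee_sq_le (d : ℕ) (a : ℝ) {v : ℝ} (hv : 0 < v) (x y : Vec d) :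
    ee d a v x y * ‖x - a • y‖ ^ 2 ≤ 2 * v := by
  have h1 : ‖x - a • y‖ ^ 2 / (2 * v) ≤ Real.exp (‖x - a • y‖ ^ 2 / (2 * v)) := by
    have := Real.add_one_le_exp (‖x - a • y‖ ^ 2 / (2 * v)); linarith
  have h2 : ee d a v x y * Real.exp (‖x - a • y‖ ^ 2 / (2 * v)) = 1 := by
    unfold ee
    rw [← Real.exp_add, Real.exp_eq_one_iff]; ring
  have h3 := mul_le_mul_of_nonneg_left h1 (ee_pos d a v x y).le
  rw [h2, ← mul_div_assoc, div_le_one (by positivity)] at h3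
  exact h3

theorem ee_norm_le (d : ℕ) (a : ℝ) {v : ℝ} (hv : 0 < v) (x y : Vec d) :
    ee d a v x y * ‖x - a • y‖ ≤ 1 + 2 * v := by
  have h1 := ee_sq_le d a hv x y
  have h2 := ee_le_one d a hv x y
  have h3 : ‖x - a • y‖ ≤ 1 + ‖x - a • y‖ ^ 2 := by nlinarith [sq_nonneg (‖x - a • y‖ - 1)]
  have := mul_le_mul_of_nonneg_left h3 (ee_pos d a v x y).le
  nlinarith

theorem cont_ee (d : ℕ) (a v : ℝ) : Continuous (fun q : Vec d × Vec d => ee d a v q.1 q.2) := by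
  unfold ee; fun_prop

theorem cont_ee_y (d : ℕ) (a v : ℝ) (x : Vec d) : Continuous (fun y => ee d a v x y) := by
  unfold ee; fun_prop

section
variable {d : ℕ} (P : Measure (Vec d)) [IsProbabilityMeasure P] (a : ℝ) {v : ℝ}

theorem int_ee (hv : 0 < v) (x : Vec d) : Integrable (fun y => ee d a v x y) P :=
  Integrable.of_bound (cont_ee_y d a v x).aestronglyMeasurable 1
    (ae_of_all _ fun y => by
      rw [Real.norm_of_nonneg (ee_pos d a v x y).le]; exact ee_le_one d a hv x y)

theorem int_ee_norm (hv : 0 < v) (x : Vec d) :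
    Integrable (fun y => ee d a v x y * ‖x - a • y‖) P :=
  Integrable.of_bound (by have := cont_ee_y d a v x; fun_prop) (1 + 2 * v)
    (ae_of_all _ fun y => by
      rw [Real.norm_of_nonneg (mul_nonneg (ee_pos d a v x y).le (norm_nonneg _))]
      exact ee_norm_le d a hv x y)

theorem int_ee_sq (hv : 0 < v) (x : Vec d) :
    Integrable (fun y => ee d a v x y * ‖x - a • y‖ ^ 2) P :=
  Integrable.of_bound (by have := cont_ee_y d a v x; fun_prop) (2 * v)
    (ae_of_all _ fun y => by
      rw [Real.norm_of_nonneg (mul_nonneg (ee_pos d a v x y).le (by positivity))]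
      exact ee_sq_le d a hv x y)

theorem int_ee_vec (hv : 0 < v) (x : Vec d) :
    Integrable (fun y => ee d a v x y • (x - a • y)) P :=
  Integrable.of_bound (by have := cont_ee_y d a v x; fun_prop) (1 + 2 * v)
    (ae_of_all _ fun y => by
      rw [norm_smul, Real.norm_of_nonneg (ee_pos d a v x y).le]
      exact ee_norm_le d a hv x y)

theorem D_pos (hv : 0 < v) (x : Vec d) : 0 < ∫ y, ee d a v x y ∂P := by
  rw [integral_pos_iff_support_of_nonneg (fun y => (ee_pos d a v x y).le) (int_ee P a hv x)]
  have : Function.support (fun y => ee d a v x y) = Set.univ := by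
    ext y; simp [(ee_pos d a v x y).ne']
  rw [this]; simp

theorem hasFDeriv_ee (hv : 0 < v) (x y : Vec d) :
    HasFDerivAt (fun x => ee d a v x y)
      (innerSL ℝ ((-v⁻¹) • (ee d a v x y • (x - a • y)))) x := by
  have h1 : HasFDerivAt (fun x : Vec d => ‖x - a • y‖ ^ 2)
      (2 • (innerSL ℝ (x - a • y)).comp (ContinuousLinearMap.id ℝ (Vec d))) x :=
    ((hasFDerivAt_id x).sub_const (a • y)).norm_sq
  have h2 := (h1.const_mul (-(1 / (2 * v)))).exp
  have e : (fun x => ee d a v x y) = fun x => Real.exp (-(1 / (2 * v)) * ‖x - a • y‖ ^ 2) := by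
    ext z; unfold ee; congr 1; ring
  rw [e]
  refine h2.congr_fderiv ?_
  rw [show ee d a v x y = Real.exp (-(1 / (2 * v)) * ‖x - a • y‖ ^ 2) from congrFun e x]
  ext u
  simp
  field_simp

theorem hasGrad_D (hv : 0 < v) (x : Vec d) :
    HasGradientAt (fun z => ∫ y, ee d a v z y ∂P)
      ((-v⁻¹) • ∫ y, ee d a v x y • (x - a • y) ∂P) x := by
  rw [hasGradientAt_iff_hasFDerivAt]
  have key := hasFDerivAt_integral_of_dominated_of_fderiv_le (𝕜 := ℝ) (μ := P)
    (F := fun z y => ee d a v z y) (s := Set.univ)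
    (F' := fun z y => innerSL ℝ ((-v⁻¹) • (ee d a v z y • (z - a • y))))
    (bound := fun _ => v⁻¹ * (1 + 2 * v)) (x₀ := x) univ_mem
    (Eventually.of_forall fun z => (cont_ee_y d a v z).aestronglyMeasurable)
    (int_ee P a hv x)
    (by have := cont_ee_y d a v x
        exact Continuous.aestronglyMeasurable (by fun_prop))
    (ae_of_all _ fun y z _ => by
      rw [innerSL_apply_norm, norm_smul, norm_smul, Real.norm_of_nonneg (ee_pos d a v z y).le,
        norm_neg, Real.norm_of_nonneg (by positivity)]
      exact mul_le_mul_of_nonneg_left (ee_norm_le d a hv z y) (by positivity))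
    (integrable_const _)
    (ae_of_all _ fun y z _ => hasFDeriv_ee a hv z y)
  refine key.congr_fderiv ?_
  rw [← integral_smul]
  exact (innerSL ℝ (E := Vec d)).integral_comp_comm ((int_ee_vec P a hv x).smul (-v⁻¹))

theorem score_formula (hv : 0 < v) {K : ℝ} (hK : 0 < K) (x : Vec d) :
    scoreOf (fun z => K * ∫ y, ee d a v z y ∂P) x =
      (-(v⁻¹ * (∫ y, ee d a v x y ∂P)⁻¹)) • ∫ y, ee d a v x y • (x - a • y) ∂P := by
  unfold scoreOf
  have hD := D_pos P a hv
  have e : (fun z => Real.log (K * ∫ y, ee d a v z y ∂P)) =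
      fun z => Real.log K + Real.log (∫ y, ee d a v z y ∂P) := by
    ext z; rw [Real.log_mul hK.ne' (hD z).ne']
  rw [e]
  apply HasGradientAt.gradient
  have h := hasGrad_D P a hv x
  rw [hasGradientAt_iff_hasFDerivAt] at h ⊢
  have h2 := (h.log (hD x).ne').const_add (Real.log K)
  refine h2.congr_fderiv ?_
  ext u
  simp
  ring

/-- The generic score function. -/
def Sc (d : ℕ) (P : Measure (Vec d)) (a v : ℝ) : Vec d → Vec d :=
  scoreOf (fun x => (2 * π * v) ^ (-(d : ℝ) / 2) * ∫ y, ee d a v x y ∂P)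

theorem fwdScore_eq (P : Measure (Vec d)) (g : ℝ → ℝ) (t : ℝ) :
    fwdScore d P g t = Sc d P (alphaF g 0 t) (sigmaSq g t) := rfl

theorem Sc_eq (hv : 0 < v) (x : Vec d) :
    Sc d P a v x =
      (-(v⁻¹ * (∫ y, ee d a v x y ∂P)⁻¹)) • ∫ y, ee d a v x y • (x - a • y) ∂P :=
  score_formula P a hv (by positivity) x

theorem Sc_meas (P : Measure (Vec d)) (v : ℝ) : Measurable (Sc d P a v) := by
  unfold Sc scoreOf gradient
  exact (LinearIsometryEquiv.continuous _).measurable.comp (measurable_fderiv ℝ _)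

/-- pointwise Chebyshev-type bound -/
theorem cheb (hv : 0 < v) {w : ℝ} (hw : v ≤ w) (x : Vec d) :
    (∫ y, ee d a w x y ∂P) * ‖Sc d P a v x‖ ^ 2 ≤
      v⁻¹ ^ 2 * ∫ y, ee d a w x y * ‖x - a • y‖ ^ 2 ∂P := by
  have hw0 : 0 < w := hv.trans_le hw
  set D := ∫ y, ee d a v x y ∂P with hD
  set M := ∫ y, ee d a v x y * ‖x - a • y‖ ∂P with hM
  have hDpos : 0 < D := D_pos P a hv x
  have hM0 : 0 ≤ M := integral_nonneg fun y => mul_nonneg (ee_pos d a v x y).le (norm_nonneg _)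
  set l := M / D with hl
  have hl0 : 0 ≤ l := by positivity
  have hnorm : ‖Sc d P a v x‖ ≤ v⁻¹ * l := by
    rw [Sc_eq P a hv, norm_smul, norm_neg, Real.norm_of_nonneg (by positivity), hl, mul_assoc,
      div_eq_inv_mul]
    gcongr
    refine (norm_integral_le_integral_norm _).trans (le_of_eq ?_)
    congr 1; ext y
    rw [norm_smul, Real.norm_of_nonneg (ee_pos d a v x y).le]
  have hcs : 0 ≤ (∫ y, ee d a v x y * ‖x - a • y‖ ^ 2 ∂P) - l ^ 2 * D := by
    have h : 0 ≤ ∫ y, ee d a v x y * (‖x - a • y‖ - l) ^ 2 ∂P :=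
      integral_nonneg fun y => mul_nonneg (ee_pos d a v x y).le (sq_nonneg _)
    have e : ∫ y, ee d a v x y * (‖x - a • y‖ - l) ^ 2 ∂P =
        (∫ y, ee d a v x y * ‖x - a • y‖ ^ 2 ∂P) - 2 * l * M + l ^ 2 * D := by
      rw [hM, hD, ← integral_const_mul, ← integral_const_mul, ← integral_sub, ← integral_add]
      · congr 1; ext y; ring
      · exact (int_ee_sq P a hv x).sub ((int_ee_norm P a hv x).const_mul _)
      · exact (int_ee P a hv x).const_mul _
      · exact int_ee_sq P a hv x
      · exact (int_ee_norm P a hv x).const_mul _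
    rw [e] at h
    have : M = l * D := by rw [hl]; field_simp
    rw [this] at h
    nlinarith
  have hch : 0 ≤ (∫ y, ee d a w x y * ‖x - a • y‖ ^ 2 ∂P) - l ^ 2 * (∫ y, ee d a w x y ∂P) := by
    let c := Real.exp (l ^ 2 / (2 * v) - l ^ 2 / (2 * w))
    have hc : 0 < c := Real.exp_pos _
    have h : 0 ≤ ∫ y, (ee d a w x y - c * ee d a v x y) * (‖x - a • y‖ ^ 2 - l ^ 2) ∂P := by
      refine integral_nonneg fun y => ?_
      set r := ‖x - a • y‖ ^ 2 with hr
      have ha : c * ee d a v x y = Real.exp (l ^ 2 / (2 * v) - l ^ 2 / (2 * w) + -r / (2 * v)) := by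
        rw [Real.exp_add]; rfl
      have hb : ee d a w x y = Real.exp (-r / (2 * w)) := rfl
      have hk : 0 ≤ 1 / (2 * v) - 1 / (2 * w) := by
        rw [sub_nonneg]; exact one_div_le_one_div_of_le (by positivity) (by linarith)
      have hid : -r / (2 * w) - (l ^ 2 / (2 * v) - l ^ 2 / (2 * w) + -r / (2 * v))
          = (1 / (2 * v) - 1 / (2 * w)) * (r - l ^ 2) := by ring
      simp only [Pi.zero_apply]
      rcases le_total (l ^ 2) r with hle | hle
      · refine mul_nonneg ?_ (by linarith)
        rw [ha, hb, sub_nonneg, Real.exp_le_exp, ← sub_nonneg, hid]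
        exact mul_nonneg hk (by linarith)
      · refine mul_nonneg_of_nonpos_of_nonpos ?_ (by linarith)
        rw [ha, hb, sub_nonpos, Real.exp_le_exp, ← sub_nonpos, hid]
        exact mul_nonpos_of_nonneg_of_nonpos hk (by linarith)
    have e : ∫ y, (ee d a w x y - c * ee d a v x y) * (‖x - a • y‖ ^ 2 - l ^ 2) ∂P =
        ((∫ y, ee d a w x y * ‖x - a • y‖ ^ 2 ∂P) - l ^ 2 * (∫ y, ee d a w x y ∂P)) -
        c * ((∫ y, ee d a v x y * ‖x - a • y‖ ^ 2 ∂P) - l ^ 2 * D) := by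
      rw [hD, ← integral_const_mul, ← integral_const_mul, ← integral_sub, ← integral_sub,
        ← integral_const_mul, ← integral_sub]
      · congr 1; ext y; ring
      · exact (int_ee_sq P a hw0 x).sub ((int_ee P a hw0 x).const_mul _)
      · exact ((int_ee_sq P a hv x).sub ((int_ee P a hv x).const_mul _)).const_mul _
      · exact int_ee_sq P a hv x
      · exact (int_ee P a hv x).const_mul _
      · exact int_ee_sq P a hw0 x
      · exact (int_ee P a hw0 x).const_mul _
    rw [e] at h
    have := mul_nonneg hc.le hcs
    linarith
  have hE := (D_pos P a hw0 x)
  calc _ ≤ (∫ y, ee d a w x y ∂P) * (v⁻¹ * l) ^ 2 := by gcongr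
    _ = v⁻¹ ^ 2 * (l ^ 2 * ∫ y, ee d a w x y ∂P) := by ring
    _ ≤ _ := by
      apply mul_le_mul_of_nonneg_left _ (by positivity)
      linarith

end

theorem int_inner {Ω : Type*} [MeasurableSpace Ω] {μ : Measure Ω} {d : ℕ} {f g : Ω → Vec d}
    (hf : MemLp f 2 μ) (hg : MemLp g 2 μ) : Integrable (fun x => inner ℝ (f x) (g x)) μ := by
  refine Integrable.mono' ((hf.integrable_norm_pow (by norm_num)).add
    (hg.integrable_norm_pow (by norm_num)))
    (hf.aestronglyMeasurable.inner hg.aestronglyMeasurable) (ae_of_all _ fun x => ?_)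
  refine (norm_inner_le_norm _ _).trans ?_
  simp only [Pi.add_apply]
  have := two_mul_le_add_sq ‖f x‖ ‖g x‖
  have h3 : 0 ≤ ‖f x‖ * ‖g x‖ := by positivity
  change _ ≤ ‖f x‖ ^ 2 + ‖g x‖ ^ 2
  nlinarith

section
variable {d : ℕ} (P : Measure (Vec d)) [IsProbabilityMeasure P] (a : ℝ)

theorem joint_lintegral {c : ℝ} (hc : 0 < c) (F : Vec d × Vec d → ℝ≥0∞) (hF : Measurable F) :
    ∫⁻ q, F (q.1, a • q.1 + c • q.2) ∂(P.prod (stdGauss d)) =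
      ∫⁻ x, ∫⁻ y, ENNReal.ofReal (kap d c * ee d a (c ^ 2) x y) * F (y, x) ∂P := by
  have hm : Measurable fun q : Vec d × Vec d =>
      ENNReal.ofReal (kap d c * ee d a (c ^ 2) q.2 q.1) := by unfold ee; fun_prop
  rw [← lintegral_map (g := fun q : Vec d × Vec d => (q.1, a • q.1 + c • q.2)) hF (by fun_prop),
    map_pair d P a hc, lintegral_withDensity_eq_lintegral_mul _ hm hF,
    lintegral_prod_symm _ (hm.mul hF).aemeasurable]
  rfl

theorem memLp_z : MemLp (fun q : Vec d × Vec d => q.2) 2 (P.prod (stdGauss d)) :=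
  (memLp_id d).comp_snd P

theorem memLp_Sc {v c : ℝ} (hv : 0 < v) (hc : 0 < c) (hvc : v ≤ c ^ 2) :
    MemLp (fun q : Vec d × Vec d => Sc d P a v (a • q.1 + c • q.2)) 2 (P.prod (stdGauss d)) := by
  have hS := Sc_meas (d := d) a P v
  have hSq : Measurable (fun q : Vec d × Vec d => Sc d P a v (a • q.1 + c • q.2)) := by fun_prop
  have hc2 : 0 < c ^ 2 := by positivity
  have hk := kap_pos d hc
  rw [memLp_two_iff_integrable_sq_norm hSq.aestronglyMeasurable]
  refine ⟨(hSq.norm.pow_const 2).aestronglyMeasurable, ?_⟩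
  rw [hasFiniteIntegral_iff_ofReal (ae_of_all _ fun q => by positivity)]
  have h1 := joint_lintegral P a hc (fun q => ENNReal.ofReal (‖Sc d P a v q.2‖ ^ 2)) (by fun_prop)
  have h2 := joint_lintegral P a hc (fun q => ENNReal.ofReal (v⁻¹ ^ 2 * ‖q.2 - a • q.1‖ ^ 2))
    (by fun_prop)
  simp only at h1 h2
  rw [h1]
  have h3 : ∫⁻ q, ENNReal.ofReal (v⁻¹ ^ 2 * ‖(a • q.1 + c • q.2) - a • q.1‖ ^ 2)
      ∂(P.prod (stdGauss d)) < ∞ := by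
    have i := ((memLp_z P).integrable_norm_pow (by norm_num)).const_mul (v⁻¹ ^ 2 * c ^ 2)
    have i2 := i.hasFiniteIntegral
    rw [hasFiniteIntegral_iff_ofReal (ae_of_all _ fun q => by positivity)] at i2
    refine lt_of_eq_of_lt (lintegral_congr fun q => ?_) i2
    congr 1
    rw [add_sub_cancel_left, norm_smul, mul_pow, Real.norm_eq_abs, sq_abs, mul_assoc]
  rw [h2] at h3
  refine lt_of_le_of_lt (lintegral_mono fun x => ?_) h3
  have e1 : ∀ y, ENNReal.ofReal (kap d c * ee d a (c ^ 2) x y) *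
      ENNReal.ofReal (‖Sc d P a v x‖ ^ 2) =
      ENNReal.ofReal (kap d c * ee d a (c ^ 2) x y * ‖Sc d P a v x‖ ^ 2) := fun y => by
    rw [ENNReal.ofReal_mul (mul_pos hk (ee_pos _ _ _ _ _)).le]
  have e2 : ∀ y, ENNReal.ofReal (kap d c * ee d a (c ^ 2) x y) *
      ENNReal.ofReal (v⁻¹ ^ 2 * ‖x - a • y‖ ^ 2) =
      ENNReal.ofReal (kap d c * v⁻¹ ^ 2 * (ee d a (c ^ 2) x y * ‖x - a • y‖ ^ 2)) := fun y => by
    rw [← ENNReal.ofReal_mul (mul_pos hk (ee_pos _ _ _ _ _)).le]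
    congr 1; ring
  simp_rw [e1, e2]
  rw [← ofReal_integral_eq_lintegral_ofReal
      (((int_ee P a hc2 x).const_mul _).mul_const _)
      (ae_of_all _ fun y => mul_nonneg (mul_pos hk (ee_pos _ _ _ _ _)).le (by positivity)),
    ← ofReal_integral_eq_lintegral_ofReal
      ((int_ee_sq P a hc2 x).const_mul _)
      (ae_of_all _ fun y => mul_nonneg (by positivity)
        (mul_nonneg (ee_pos _ _ _ _ _).le (by positivity)))]
  apply ENNReal.ofReal_le_ofReal
  rw [integral_mul_const, integral_const_mul, integral_const_mul, mul_assoc, mul_assoc]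
  exact mul_le_mul_of_nonneg_left (cheb P a hv hvc x) hk.le

theorem tweedie {c : ℝ} (hc : 0 < c) (h : Vec d → Vec d) (hm : Measurable h)
    (hL : MemLp (fun q : Vec d × Vec d => h (a • q.1 + c • q.2)) 2 (P.prod (stdGauss d))) :
    ∫ q, inner ℝ (Sc d P a (c ^ 2) (a • q.1 + c • q.2)) (h (a • q.1 + c • q.2))
        ∂(P.prod (stdGauss d)) =
      -c⁻¹ * ∫ q, inner ℝ q.2 (h (a • q.1 + c • q.2)) ∂(P.prod (stdGauss d)) := by
  have hc2 : 0 < c ^ 2 := by positivity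
  have hk := kap_pos d hc
  have hS := Sc_meas (d := d) a P (c ^ 2)
  have i1 := int_inner (memLp_Sc P a hc2 hc le_rfl) hL
  have i2 := int_inner (memLp_z P) hL
  let Φ : Vec d × Vec d → ℝ := fun q =>
    inner ℝ (Sc d P a (c ^ 2) q.2 + (c ^ 2)⁻¹ • (q.2 - a • q.1)) (h q.2)
  have hΦ : Measurable Φ := by unfold Φ; fun_prop
  have e : ∀ q : Vec d × Vec d, Φ (q.1, a • q.1 + c • q.2) =
      inner ℝ (Sc d P a (c ^ 2) (a • q.1 + c • q.2)) (h (a • q.1 + c • q.2)) +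
      c⁻¹ * inner ℝ q.2 (h (a • q.1 + c • q.2)) := by
    intro q
    simp only [Φ]
    rw [add_sub_cancel_left, inner_add_left, smul_smul, real_inner_smul_left]
    congr 2
    field_simp
  have iΦ : Integrable (fun q : Vec d × Vec d => Φ (q.1, a • q.1 + c • q.2))
      (P.prod (stdGauss d)) := by
    simp_rw [e]; exact i1.add (i2.const_mul _)
  have hT : Measurable (fun q : Vec d × Vec d => (q.1, a • q.1 + c • q.2)) := by fun_prop
  have hden : Measurable fun q : Vec d × Vec d =>
      ENNReal.ofReal (kap d c * ee d a (c ^ 2) q.2 q.1) := by unfold ee; fun_prop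
  have iΦ' := (integrable_map_measure (μ := P.prod (stdGauss d)) hΦ.aestronglyMeasurable
    hT.aemeasurable).2 iΦ
  rw [map_pair d P a hc, integrable_withDensity_iff_integrable_smul' hden (by simp)] at iΦ'
  have zero : ∫ q, Φ (q.1, a • q.1 + c • q.2) ∂(P.prod (stdGauss d)) = 0 := by
    rw [← integral_map (μ := P.prod (stdGauss d)) (φ := fun q : Vec d × Vec d =>
      (q.1, a • q.1 + c • q.2)) hT.aemeasurable hΦ.aestronglyMeasurable, map_pair d P a hc,
      integral_withDensity_eq_integral_toReal_smul hden (by simp), integral_prod_symm _ iΦ']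
    refine integral_eq_zero_of_ae (ae_of_all _ fun x => ?_)
    have e3 : ∀ y, (ENNReal.ofReal (kap d c * ee d a (c ^ 2) x y)).toReal • Φ (y, x) =
        kap d c * (inner ℝ (h x) (ee d a (c ^ 2) x y • Sc d P a (c ^ 2) x
          + (c ^ 2)⁻¹ • (ee d a (c ^ 2) x y • (x - a • y)))) := by
      intro y
      rw [ENNReal.toReal_ofReal (mul_pos hk (ee_pos _ _ _ _ _)).le, real_inner_comm]
      simp only [Φ, inner_add_left, real_inner_smul_left, smul_eq_mul]
      ring
    simp only [e3, Pi.zero_apply]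
    have j1 := (int_ee P a hc2 x).smul_const (Sc d P a (c ^ 2) x)
    have j2 := (int_ee_vec P a hc2 x).smul ((c ^ 2)⁻¹)
    rw [integral_const_mul, integral_inner (by exact j1.add j2), integral_add (by exact j1)
      (by exact j2), integral_smul_const, integral_smul, Sc_eq P a hc2 x, smul_smul, ← add_smul]
    have hD := (D_pos P a hc2 x).ne'
    have : (∫ y, ee d a (c ^ 2) x y ∂P) * -((c ^ 2)⁻¹ * (∫ y, ee d a (c ^ 2) x y ∂P)⁻¹)
        + (c ^ 2)⁻¹ = 0 := by field_simp; ring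
    rw [this]; simp
  simp_rw [e] at zero
  rw [integral_add i1 (i2.const_mul _), integral_const_mul] at zero
  linarith

end

theorem rot_stdGauss (d : ℕ) {c b : ℝ} (h : c ^ 2 + b ^ 2 = 1) :
    ((stdGauss d).prod (stdGauss d)).map
      (fun q => (c • q.1 + b • q.2, b • q.1 - c • q.2)) = (stdGauss d).prod (stdGauss d) := by
  let L : (Vec d × Vec d) →ₗ[ℝ] (Vec d × Vec d) :=
    { toFun := fun q => (c • q.1 + b • q.2, b • q.1 - c • q.2)
      map_add' := by intro p q; ext <;> simp <;> ring
      map_smul' := by intro r q; ext <;> simp <;> ring }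
  have hLL : L * L = 1 := by
    ext q i <;> simp [L] <;> first | linear_combination (q i) * h | ring1
  have hdet : L.det * L.det = 1 := by rw [← map_mul, hLL, map_one]
  have hdet0 : L.det ≠ 0 := by intro h0; simp [h0] at hdet
  have habs : |(L.det)⁻¹| = 1 := by
    rw [abs_inv]
    rcases mul_self_eq_one_iff.mp hdet with h | h <;> simp [h]
  have hvol : ((volume : Measure (Vec d)).prod (volume : Measure (Vec d))).map L =
      (volume : Measure (Vec d)).prod (volume : Measure (Vec d)) := by
    rw [Measure.map_linearMap_addHaar_eq_smul_addHaar _ hdet0, habs]; simp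
  have hg := (measurable_gd d 0 1).ennreal_ofReal
  have hprod : (stdGauss d).prod (stdGauss d) =
      ((volume : Measure (Vec d)).prod (volume : Measure (Vec d))).withDensity
        (fun z => ENNReal.ofReal (gaussDensity d 0 1 z.1) *
          ENNReal.ofReal (gaussDensity d 0 1 z.2)) := by
    have : IsFiniteMeasure (stdGauss d) := inferInstance
    unfold stdGauss gaussMeasure at *
    exact prod_withDensity hg hg
  have hLm : Measurable L := by
    change Measurable (fun q : Vec d × Vec d => (c • q.1 + b • q.2, b • q.1 - c • q.2))
    fun_prop
  have hgg : Measurable (fun z : Vec d × Vec d => ENNReal.ofReal (gaussDensity d 0 1 z.1) *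
          ENNReal.ofReal (gaussDensity d 0 1 z.2)) :=
    (hg.comp measurable_fst).mul (hg.comp measurable_snd)
  change Measure.map L _ = _
  refine Measure.ext_of_lintegral _ fun f hf => ?_
  rw [lintegral_map hf hLm, hprod, lintegral_withDensity_eq_lintegral_mul _ hgg (g := fun q => f (L q)) (hf.comp hLm),
    lintegral_withDensity_eq_lintegral_mul _ hgg hf]
  conv_rhs => rw [← hvol]
  rw [lintegral_map (hgg.mul hf) hLm]
  congr 1
  ext q
  simp only [Pi.mul_apply]
  congr 1
  have hn : ∀ z : Vec d, 0 ≤ gaussDensity d 0 1 z := fun z => by rw [gd_std]; positivity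
  rw [← ENNReal.ofReal_mul (hn _), ← ENNReal.ofReal_mul (hn _)]
  congr 1
  simp only [gd_std]
  have hsq : ‖(L q).1‖ ^ 2 + ‖(L q).2‖ ^ 2 = ‖q.1‖ ^ 2 + ‖q.2‖ ^ 2 := by
    change ‖c • q.1 + b • q.2‖ ^ 2 + ‖b • q.1 - c • q.2‖ ^ 2 = _
    rw [norm_add_sq_real, norm_sub_sq_real]
    simp only [norm_smul, real_inner_smul_left, real_inner_smul_right, mul_pow, Real.norm_eq_abs,
      sq_abs]
    linear_combination (‖q.1‖ ^ 2 + ‖q.2‖ ^ 2) * h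
  have : ∀ A B K : ℝ, K * Real.exp (-A / 2) * (K * Real.exp (-B / 2)) =
      K * K * Real.exp (-(A + B) / 2) := by
    intro A B K
    rw [show -(A + B) / 2 = -A / 2 + -B / 2 by ring, Real.exp_add]; ring
  rw [this, this, hsq]

section
variable {d : ℕ} (P : Measure (Vec d)) [IsProbabilityMeasure P]

/-- The rotation acting on the two Gaussian coordinates. -/
def R3 (d : ℕ) (c b : ℝ) (ω : Vec d × Vec d × Vec d) : Vec d × Vec d × Vec d :=
  (ω.1, c • ω.2.1 + b • ω.2.2, b • ω.2.1 - c • ω.2.2)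

theorem mp_R3 {c b : ℝ} (h : c ^ 2 + b ^ 2 = 1) :
    MeasurePreserving (R3 d c b) (coupleMeasure d P) (coupleMeasure d P) :=
  (MeasurePreserving.id P).prod ⟨by fun_prop, rot_stdGauss d h⟩

theorem mp_assoc (P : Measure (Vec d)) [SFinite P] : MeasurePreserving
    (fun q : (Vec d × Vec d) × Vec d => (q.1.1, q.1.2, q.2))
    ((P.prod (stdGauss d)).prod (stdGauss d)) (coupleMeasure d P) :=
  measurePreserving_prodAssoc P (stdGauss d) (stdGauss d)

theorem mp_assoc_symm (P : Measure (Vec d)) [SFinite P] : MeasurePreserving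
    (fun ω : Vec d × Vec d × Vec d => ((ω.1, ω.2.1), ω.2.2)) (coupleMeasure d P)
    ((P.prod (stdGauss d)).prod (stdGauss d)) :=
  MeasurePreserving.symm MeasurableEquiv.prodAssoc
    (measurePreserving_prodAssoc P (stdGauss d) (stdGauss d))

theorem integral_assoc (P : Measure (Vec d)) [SFinite P] (f : Vec d × Vec d × Vec d → ℝ) :
    ∫ ω, f ω ∂(coupleMeasure d P) =
      ∫ q, f (q.1.1, q.1.2, q.2) ∂((P.prod (stdGauss d)).prod (stdGauss d)) :=
  ((measurePreserving_prodAssoc P (stdGauss d) (stdGauss d)).integral_comp' f).symm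

theorem lift_memLp {f : Vec d × Vec d → Vec d} (hf : MemLp f 2 (P.prod (stdGauss d))) :
    MemLp (fun ω : Vec d × Vec d × Vec d => f (ω.1, ω.2.1)) 2 (coupleMeasure d P) :=
  (hf.comp_fst (stdGauss d)).comp_measurePreserving (mp_assoc_symm P)

theorem integral_R3 {c b : ℝ} (h : c ^ 2 + b ^ 2 = 1) {f : Vec d × Vec d × Vec d → ℝ}
    (hf : Measurable f) :
    ∫ ω, f (R3 d c b ω) ∂(coupleMeasure d P) = ∫ ω, f ω ∂(coupleMeasure d P) := by
  conv_rhs => rw [← (mp_R3 P h).map_eq]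
  rw [integral_map (mp_R3 P h).measurable.aemeasurable hf.aestronglyMeasurable]

theorem memLp_z1 : MemLp (fun ω : Vec d × Vec d × Vec d => ω.2.1) 2 (coupleMeasure d P) :=
  lift_memLp P (memLp_z P)

theorem memLp_z2 : MemLp (fun ω : Vec d × Vec d × Vec d => ω.2.2) 2 (coupleMeasure d P) :=
  ((memLp_id d).comp_snd (P.prod (stdGauss d))).comp_measurePreserving (mp_assoc_symm P)

theorem step1 (a : ℝ) {τ : ℝ} (hτ : 0 < τ) (α κ : ℝ) (h : Vec d → Vec d) (hm : Measurable h)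
    (hL : MemLp (fun ω : Vec d × Vec d × Vec d =>
      h (α • (a • ω.1 + τ • ω.2.1) + κ • ω.2.2)) 2 (coupleMeasure d P)) :
    ∫ ω, inner ℝ (Sc d P a (τ ^ 2) (a • ω.1 + τ • ω.2.1))
        (h (α • (a • ω.1 + τ • ω.2.1) + κ • ω.2.2)) ∂(coupleMeasure d P) =
      -τ⁻¹ * ∫ ω, inner ℝ ω.2.1 (h (α • (a • ω.1 + τ • ω.2.1) + κ • ω.2.2))
        ∂(coupleMeasure d P) := by
  have hA : MemLp (fun ω : Vec d × Vec d × Vec d =>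
      Sc d P a (τ ^ 2) (a • ω.1 + τ • ω.2.1)) 2 (coupleMeasure d P) :=
    lift_memLp P (memLp_Sc P a (by positivity) hτ le_rfl)
  have i1 := (mp_assoc P).integrable_comp_of_integrable (int_inner hA hL)
  have i2 := (mp_assoc P).integrable_comp_of_integrable (int_inner (memLp_z1 P) hL)
  have i3 := (mp_assoc P).integrable_comp_of_integrable (hL.integrable_norm_pow (by norm_num))
  rw [integral_assoc, integral_assoc]
  refine (integral_prod_symm _ i1).trans (Eq.trans ?_
    (congrArg (fun r => -τ⁻¹ * r) (integral_prod_symm _ i2).symm))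
  rw [← integral_const_mul]
  refine integral_congr_ae ?_
  filter_upwards [i3.prod_left_ae] with z' hz'
  refine tweedie P a hτ (fun x => h (α • x + κ • z')) (by fun_prop) ?_
  rw [memLp_two_iff_integrable_sq_norm]
  · exact hz'
  · exact Measurable.aestronglyMeasurable (by fun_prop)

theorem step3 (a : ℝ) {ς : ℝ} (hς : 0 < ς) (h : Vec d → Vec d) (hm : Measurable h)
    (hL : MemLp (fun q : Vec d × Vec d => h (a • q.1 + ς • q.2)) 2 (P.prod (stdGauss d)))
    (c b : ℝ) :
    ∫ ω, inner ℝ (c • ω.2.1 + b • ω.2.2) (h (a • ω.1 + ς • ω.2.1)) ∂(coupleMeasure d P) =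
      -(c * ς) * ∫ ω, inner ℝ (Sc d P a (ς ^ 2) (a • ω.1 + ς • ω.2.1)) (h (a • ω.1 + ς • ω.2.1))
        ∂(coupleMeasure d P) := by
  have hL3 : MemLp (fun ω : Vec d × Vec d × Vec d => h (a • ω.1 + ς • ω.2.1)) 2
    (coupleMeasure d P) := lift_memLp P hL
  have j1 := int_inner (memLp_z1 P) hL3
  have j2 := int_inner (memLp_z2 P) hL3
  have z : ∫ ω, inner ℝ ω.2.2 (h (a • ω.1 + ς • ω.2.1)) ∂(coupleMeasure d P) = 0 := by
    rw [integral_assoc]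
    refine (integral_prod _ ((mp_assoc P).integrable_comp_of_integrable j2)).trans ?_
    refine integral_eq_zero_of_ae (ae_of_all _ fun q => ?_)
    simp only [Pi.zero_apply, Function.comp]
    simp_rw [real_inner_comm (h (a • q.1 + ς • q.2))]
    rw [integral_inner ((memLp_id d).integrable (by norm_num)), integral_id_stdGauss, inner_zero_right]
  simp_rw [inner_add_left, real_inner_smul_left]
  rw [integral_add (j1.const_mul c) (j2.const_mul b), integral_const_mul, integral_const_mul, z,
    integral_assoc, integral_assoc,
    integral_fun_fst (μ := P.prod (stdGauss d)) (ν := stdGauss d)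
      (f := fun q : Vec d × Vec d => inner ℝ q.2 (h (a • q.1 + ς • q.2))),
    integral_fun_fst (μ := P.prod (stdGauss d)) (ν := stdGauss d)
      (f := fun q : Vec d × Vec d =>
        inner ℝ (Sc d P a (ς ^ 2) (a • q.1 + ς • q.2)) (h (a • q.1 + ς • q.2))),
    tweedie P a hς h hm hL]
  simp only [smul_eq_mul]
  field_simp
  ring

theorem core (a : ℝ) {τ α κ ς : ℝ} (hτ : 0 < τ) (hα : 0 < α) (hς : 0 < ς)
    (hs : ς ^ 2 = α ^ 2 * τ ^ 2 + κ ^ 2) :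
    (∫ ω, ‖Sc d P a (τ ^ 2) (a • ω.1 + τ • ω.2.1) -
        Sc d P (α * a) (ς ^ 2) (α • (a • ω.1 + τ • ω.2.1) + κ • ω.2.2)‖ ^ 2
          ∂(coupleMeasure d P)) ≤
        4 * (∫ ω, ‖Sc d P a (τ ^ 2) (a • ω.1 + τ • ω.2.1) -
              Sc d P a (τ ^ 2) (α⁻¹ • (α • (a • ω.1 + τ • ω.2.1) + κ • ω.2.2))‖ ^ 2
            ∂(coupleMeasure d P)) +
        2 * (∫ ω, ‖Sc d P a (τ ^ 2) (a • ω.1 + τ • ω.2.1)‖ ^ 2 ∂(coupleMeasure d P)) *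
          (1 - α⁻¹) ^ 2 := by
  let c := α * τ / ς
  let b := κ / ς
  have hcb : c ^ 2 + b ^ 2 = 1 := by
    simp only [c, b]; field_simp; linarith
  have hcς : ς * c = α * τ := by simp only [c]; field_simp
  have hbς : ς * b = κ := by simp only [b]; field_simp
  let xs : Vec d × Vec d × Vec d → Vec d := fun ω => α • (a • ω.1 + τ • ω.2.1) + κ • ω.2.2
  have hxs : Measurable xs := by unfold xs; fun_prop
  have xs_eq : ∀ ω, xs ω = (α * a) • (R3 d c b ω).1 + ς • (R3 d c b ω).2.1 := by
    intro ω
    simp only [xs, R3, smul_add, smul_smul, hcς, hbς]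
    abel
  have xs_R : ∀ ω, xs (R3 d c b ω) = (α * a) • ω.1 + ς • ω.2.1 := by
    intro ω
    rw [xs_eq]
    simp only [R3]
    congr 2
    have : c • (c • ω.2.1 + b • ω.2.2) + b • (b • ω.2.1 - c • ω.2.2) =
      (c ^ 2 + b ^ 2) • ω.2.1 := by module
    rw [this, hcb, one_smul]
  let A : Vec d × Vec d × Vec d → Vec d := fun ω => Sc d P a (τ ^ 2) (a • ω.1 + τ • ω.2.1)
  let fS : Vec d → Vec d := Sc d P (α * a) (ς ^ 2)
  let fB : Vec d → Vec d := fun x => Sc d P a (τ ^ 2) (α⁻¹ • x)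
  have mS : Measurable fS := Sc_meas _ _ _
  have mB : Measurable fB := (Sc_meas a P (τ ^ 2)).comp (measurable_const_smul _)
  have LS0 : MemLp (fun q : Vec d × Vec d => fS ((α * a) • q.1 + ς • q.2)) 2
      (P.prod (stdGauss d)) := memLp_Sc P (α * a) (by positivity) hς le_rfl
  have LB0 : MemLp (fun q : Vec d × Vec d => fB ((α * a) • q.1 + ς • q.2)) 2
      (P.prod (stdGauss d)) := by
    have hle : τ ^ 2 ≤ (α⁻¹ * ς) ^ 2 := by
      rw [mul_pow, hs]
      have : α⁻¹ ^ 2 * (α ^ 2 * τ ^ 2 + κ ^ 2) = τ ^ 2 + α⁻¹ ^ 2 * κ ^ 2 := by field_simp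
      rw [this]
      have : 0 ≤ α⁻¹ ^ 2 * κ ^ 2 := by positivity
      linarith
    have := memLp_Sc P a (v := τ ^ 2) (c := α⁻¹ * ς) (by positivity) (by positivity) hle
    have e : ∀ q : Vec d × Vec d, fB ((α * a) • q.1 + ς • q.2) =
        Sc d P a (τ ^ 2) (a • q.1 + (α⁻¹ * ς) • q.2) := by
      intro q
      simp only [fB, smul_add, smul_smul]
      rw [inv_mul_cancel_left₀ hα.ne']
    simp_rw [e]
    exact this
  have up : ∀ h : Vec d → Vec d, MemLp (fun q : Vec d × Vec d => h ((α * a) • q.1 + ς • q.2)) 2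
      (P.prod (stdGauss d)) → MemLp (fun ω => h (xs ω)) 2 (coupleMeasure d P) := by
    intro h hh
    have := (lift_memLp P hh).comp_measurePreserving (mp_R3 P hcb)
    simp_rw [xs_eq]
    exact this
  have LA : MemLp A 2 (coupleMeasure d P) :=
    lift_memLp P (memLp_Sc P a (by positivity) hτ le_rfl)
  have LS := up fS LS0
  have LB := up fB LB0
  have orth : ∀ h : Vec d → Vec d, Measurable h →
      MemLp (fun q : Vec d × Vec d => h ((α * a) • q.1 + ς • q.2)) 2 (P.prod (stdGauss d)) →
      ∫ ω, inner ℝ (A ω) (h (xs ω)) ∂(coupleMeasure d P) =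
        α * ∫ ω, inner ℝ (fS (xs ω)) (h (xs ω)) ∂(coupleMeasure d P) := by
    intro h hm hh
    have s1 := step1 P a hτ α κ h hm (up h hh)
    have s2 := integral_R3 P hcb (f := fun ω => inner ℝ ω.2.1 (h (xs ω))) (by fun_prop)
    have s3 := step3 P (α * a) hς h hm hh c b
    have s4 := integral_R3 P hcb (f := fun ω : Vec d × Vec d × Vec d =>
      inner ℝ (fS ((α * a) • ω.1 + ς • ω.2.1)) (h ((α * a) • ω.1 + ς • ω.2.1))) (by fun_prop)
    simp only [xs_R] at s2
    simp only [← xs_eq] at s4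
    change ∫ ω, inner ℝ (A ω) (h (xs ω)) ∂(coupleMeasure d P) = -τ⁻¹ *
      ∫ ω, inner ℝ ω.2.1 (h (xs ω)) ∂(coupleMeasure d P) at s1
    rw [s1, ← s2, s4]
    refine (congrArg (fun r => -τ⁻¹ * r) s3).trans ?_
    rw [show c * ς = α * τ by rw [mul_comm]; exact hcς]
    rw [← mul_assoc]
    congr 1
    field_simp
  have oS := orth fS mS LS0
  have oB := orth fB mB LB0
  have expand : ∀ F G : Vec d × Vec d × Vec d → Vec d, MemLp F 2 (coupleMeasure d P) →
      MemLp G 2 (coupleMeasure d P) → ∫ ω, ‖F ω - G ω‖ ^ 2 ∂(coupleMeasure d P) =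
      (∫ ω, ‖F ω‖ ^ 2 ∂(coupleMeasure d P)) - 2 * (∫ ω, inner ℝ (F ω) (G ω) ∂(coupleMeasure d P))
        + ∫ ω, ‖G ω‖ ^ 2 ∂(coupleMeasure d P) := by
    intro F G hF hG
    have iF : Integrable (fun ω => ‖F ω‖ ^ 2) (coupleMeasure d P) :=
      hF.integrable_norm_pow (by norm_num)
    have iG : Integrable (fun ω => ‖G ω‖ ^ 2) (coupleMeasure d P) :=
      hG.integrable_norm_pow (by norm_num)
    have iFG := (int_inner hF hG).const_mul 2
    simp_rw [norm_sub_sq_real]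
    rw [integral_add (by exact iF.sub iFG) iG, integral_sub iF iFG, integral_const_mul]
  have xAS := expand A (fun ω => fS (xs ω)) LA LS
  have xAB := expand A (fun ω => fB (xs ω)) LA LB
  have xAaS := expand A (fun ω => α • fS (xs ω)) LA (LS.const_smul α)
  have xaSB := expand (fun ω => α • fS (xs ω)) (fun ω => fB (xs ω)) (LS.const_smul α) LB
  simp only [real_inner_smul_left, real_inner_smul_right, norm_smul, mul_pow, integral_const_mul,
    Real.norm_eq_abs, sq_abs] at xAaS xaSB
  have nAaS : 0 ≤ ∫ ω, ‖A ω - α • fS (xs ω)‖ ^ 2 ∂(coupleMeasure d P) :=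
    integral_nonneg fun _ => by positivity
  have naSB : 0 ≤ ∫ ω, ‖α • fS (xs ω) - fB (xs ω)‖ ^ 2 ∂(coupleMeasure d P) :=
    integral_nonneg fun _ => by positivity
  simp only [real_inner_self_eq_norm_sq] at oS
  change ∫ ω, ‖A ω - fS (xs ω)‖ ^ 2 ∂(coupleMeasure d P) ≤
    4 * (∫ ω, ‖A ω - fB (xs ω)‖ ^ 2 ∂(coupleMeasure d P)) +
      2 * (∫ ω, ‖A ω‖ ^ 2 ∂(coupleMeasure d P)) * (1 - α⁻¹) ^ 2
  rw [xAS, xAB, oS, oB]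
  rw [xAaS, oS] at nAaS
  rw [xaSB] at naSB
  have nA : 0 ≤ ∫ ω, ‖A ω‖ ^ 2 ∂(coupleMeasure d P) := integral_nonneg fun _ => by positivity
  generalize (∫ ω, ‖A ω‖ ^ 2 ∂(coupleMeasure d P)) = AA at *
  generalize (∫ ω, ‖fS (xs ω)‖ ^ 2 ∂(coupleMeasure d P)) = SS at *
  generalize (∫ ω, ‖fB (xs ω)‖ ^ 2 ∂(coupleMeasure d P)) = BB at *
  generalize (∫ ω, inner ℝ (fS (xs ω)) (fB (xs ω)) ∂(coupleMeasure d P)) = SB at *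
  have k1 : (1 - α) ^ 2 * SS ≤ AA * (1 - α⁻¹) ^ 2 := by
    have e : (1 - α) ^ 2 * SS = (α ^ 2 * SS) * (1 - α⁻¹) ^ 2 := by field_simp; ring
    rw [e]
    exact mul_le_mul_of_nonneg_right (by linarith) (sq_nonneg _)
  have k2 : 0 ≤ AA * (1 - α⁻¹) ^ 2 := by positivity
  nlinarith

end
/-- Lemma `time-discrete`: the time-discretization error of the score is
absorbed into the space-discretization error. -/
theorem statement7 :
    ∀ (d : ℕ) (T t s : ℝ) (P : Measure (Vec d)) (g : ℝ → ℝ),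
      IsProbabilityMeasure P →
      ContinuousOn g (Set.Icc 0 T) → (∀ u ∈ Set.Ioc (0 : ℝ) T, 0 < g u) →
      0 < t → t ≤ s → s ≤ T →
      (∫ ω, ‖fwdScore d P g t (xt d g t ω) - fwdScore d P g s (xts d g t s ω)‖ ^ 2
          ∂(coupleMeasure d P)) ≤
        4 * (∫ ω, ‖fwdScore d P g t (xt d g t ω) -
              fwdScore d P g t ((alphaF g t s)⁻¹ • xts d g t s ω)‖ ^ 2
            ∂(coupleMeasure d P)) +
        2 * (∫ ω, ‖fwdScore d P g t (xt d g t ω)‖ ^ 2 ∂(coupleMeasure d P)) *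
          (1 - (alphaF g t s)⁻¹) ^ 2 := by
  intro d T t s P g hP hg hpos ht hts hsT
  have ii : ∀ p q : ℝ, p ∈ Set.Icc 0 T → q ∈ Set.Icc 0 T →
      IntervalIntegrable (fun u => g u ^ 2) volume p q := by
    intro p q hp hq
    apply ContinuousOn.intervalIntegrable
    exact (hg.mono (Set.uIcc_subset_Icc hp hq)).pow 2
  have m0 : (0 : ℝ) ∈ Set.Icc 0 T := ⟨le_rfl, by linarith⟩
  have mt : t ∈ Set.Icc 0 T := ⟨ht.le, by linarith⟩
  have ms : s ∈ Set.Icc 0 T := ⟨by linarith, hsT⟩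
  have hGt : 0 < Gvar g 0 t :=
    intervalIntegral.intervalIntegral_pos_of_pos_on (ii 0 t m0 mt)
      (fun x hx => pow_pos (hpos x ⟨hx.1, hx.2.le.trans mt.2⟩) 2) ht
  have hGts : 0 ≤ Gvar g t s :=
    intervalIntegral.integral_nonneg hts (fun u _ => sq_nonneg _)
  have hadd : Gvar g 0 s = Gvar g 0 t + Gvar g t s :=
    (intervalIntegral.integral_add_adjacent_intervals (ii 0 t m0 mt) (ii t s mt ms)).symm
  have hαs : alphaF g 0 s = alphaF g t s * alphaF g 0 t := by
    unfold alphaF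
    rw [hadd, ← Real.exp_add]; congr 1; ring
  have hα2 : alphaF g t s ^ 2 = Real.exp (-(Gvar g t s)) := by
    unfold alphaF
    rw [← Real.exp_nat_mul]; congr 1; push_cast; ring
  have hα0 : 0 < alphaF g t s := Real.exp_pos _
  have hvt : 0 < sigmaSq g t := by
    unfold sigmaSq
    rw [sub_pos, Real.exp_lt_one_iff]; linarith
  have hvs : 0 < sigmaSq g s := by
    unfold sigmaSq
    rw [sub_pos, Real.exp_lt_one_iff]; linarith
  have hk : 0 ≤ 1 - alphaF g t s ^ 2 := by
    rw [hα2, sub_nonneg, Real.exp_le_one_iff]; linarith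
  have hrel : sigmaSq g s = alphaF g t s ^ 2 * sigmaSq g t + (1 - alphaF g t s ^ 2) := by
    rw [hα2]; unfold sigmaSq
    rw [hadd, neg_add, Real.exp_add]; ring
  have key := core P (alphaF g 0 t) (τ := Real.sqrt (sigmaSq g t)) (α := alphaF g t s)
    (κ := Real.sqrt (1 - alphaF g t s ^ 2)) (ς := Real.sqrt (sigmaSq g s))
    (Real.sqrt_pos.mpr hvt) hα0 (Real.sqrt_pos.mpr hvs)
    (by rw [Real.sq_sqrt hvs.le, Real.sq_sqrt hvt.le, Real.sq_sqrt hk]; exact hrel)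
  rw [Real.sq_sqrt hvs.le, Real.sq_sqrt hvt.le, ← hαs] at key
  exact key

end DiffusionKL
end
end

section
/- There is a universal constant C > 0 such that the following holds. Let P be a probability measure on ℝ^d, σ > 0, and let p_σ be the density of the Gaussian perturbation of P with variance σ². Then for every integer p ≥ 1, E_{X∼p_σ}‖∇²log p_σ(X)‖_F^p ≤ (C·p·d/σ²)^p; equivalently, the sub-exponential (ψ₁-Orlicz) norm of the random variable ‖∇²log p_σ(X)‖_F is at most C·d/σ². -/
open MeasureTheory Real

noncomputable section

namespace DiffusionKL

lemma aux_hasFDerivAt {d : ℕ} (P : Measure (Vec d)) [IsProbabilityMeasure P] (φ : Vec d → ℝ)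
    (φ' : Vec d → (Vec d →L[ℝ] ℝ)) (hφ : ∀ w, HasFDerivAt φ (φ' w) w) (hc : Continuous φ')
    (M M' : ℝ) (hM : ∀ w, ‖φ' w‖ ≤ M) (hM' : ∀ w, |φ w| ≤ M') (x : Vec d) :
    HasFDerivAt (fun x => ∫ y, φ (x - y) ∂P) (∫ y, φ' (x - y) ∂P) x := by
  have hcφ : Continuous φ := continuous_iff_continuousAt.2 fun w => (hφ w).continuousAt
  refine hasFDerivAt_integral_of_dominated_of_fderiv_le (bound := fun _ => M)
    (F := fun x y => φ (x - y)) (F' := fun x y => φ' (x - y)) (s := Set.univ) Filter.univ_mem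
    ?_ ?_ ?_ ?_ ?_ ?_
  · refine Filter.Eventually.of_forall fun x => ?_
    exact (hcφ.comp (continuous_const.sub continuous_id)).aestronglyMeasurable
  · exact Integrable.of_bound (hcφ.comp (continuous_const.sub continuous_id)).aestronglyMeasurable
      M' (Filter.Eventually.of_forall fun y => by simpa using hM' _)
  · exact (hc.comp (continuous_const.sub continuous_id)).aestronglyMeasurable
  · exact Filter.Eventually.of_forall fun y x _ => hM _
  · exact integrable_const _
  · refine Filter.Eventually.of_forall fun y x _ => ?_
    have := (hφ (x - y)).comp x ((hasFDerivAt_id x).sub_const y)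
    simpa [Function.comp_def] using this

def kk {d : ℕ} (s : ℝ) (w : Vec d) : ℝ := Real.exp (-s * ‖w‖ ^ 2)

lemma kk_pos {d : ℕ} (s : ℝ) (w : Vec d) : 0 < kk s w := Real.exp_pos _

@[fun_prop]
lemma kk_cont {d : ℕ} (s : ℝ) : Continuous (fun w : Vec d => kk s w) := by
  unfold kk; fun_prop

lemma kk_le {d : ℕ} {s : ℝ} (hs : 0 < s) (w : Vec d) : kk s w ≤ 1 := by
  unfold kk
  rw [Real.exp_le_one_iff]
  have := mul_nonneg hs.le (sq_nonneg ‖w‖)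
  linarith

lemma kk_sq_le {d : ℕ} {s : ℝ} (hs : 0 < s) (w : Vec d) : s * (kk s w * ‖w‖ ^ 2) ≤ 1 := by
  unfold kk
  have h := Real.add_one_le_exp (s * ‖w‖ ^ 2)
  have h2 : Real.exp (-s * ‖w‖ ^ 2) * Real.exp (s * ‖w‖ ^ 2) = 1 := by
    rw [← Real.exp_add]; simp
  have h3 := Real.exp_pos (-s * ‖w‖ ^ 2)
  nlinarith

lemma kk_one_le {d : ℕ} {s : ℝ} (hs : 0 < s) (w : Vec d) : kk s w * ‖w‖ ≤ 1 + 1 / s := by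
  have h1 := kk_le hs w
  have h2 := kk_sq_le hs w
  have h3 := kk_pos s w
  have h4 : kk s w * ‖w‖ ^ 2 ≤ 1 / s := by rw [le_div_iff₀ hs]; linarith
  nlinarith [sq_nonneg (‖w‖ - 1), norm_nonneg w]

lemma kk_fderiv {d : ℕ} (s : ℝ) (w : Vec d) :
    HasFDerivAt (fun w : Vec d => kk s w) ((-2 * s * kk s w) • innerSL ℝ w) w := by
  unfold kk
  have h := ((hasStrictFDerivAt_norm_sq w).hasFDerivAt.const_mul (-s)).exp
  have e : (-2 * s * Real.exp (-s * ‖w‖ ^ 2)) • innerSL ℝ w =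
      Real.exp (-s * ‖w‖ ^ 2) • -s • 2 • innerSL ℝ w := by
    rw [← Nat.cast_smul_eq_nsmul ℝ, smul_smul, smul_smul]
    congr 1
    push_cast
    ring
  rw [e]
  exact h

lemma norm_proj_le {d : ℕ} (j : Fin d) :
    ‖(EuclideanSpace.proj j : Vec d →L[ℝ] ℝ)‖ ≤ 1 := by
  refine ContinuousLinearMap.opNorm_le_bound _ zero_le_one fun v => ?_
  simpa using PiLp.norm_apply_le v j

lemma abs_coord_le {d : ℕ} (w : Vec d) (j : Fin d) : |w j| ≤ ‖w‖ := by
  simpa using PiLp.norm_apply_le w j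

lemma kkj_fderiv {d : ℕ} (s : ℝ) (j : Fin d) (w : Vec d) :
    HasFDerivAt (fun w : Vec d => kk s w * w j)
      (kk s w • (EuclideanSpace.proj j : Vec d →L[ℝ] ℝ)
        + (w j) • ((-2 * s * kk s w) • innerSL ℝ w)) w := by
  exact (kk_fderiv s w).mul (EuclideanSpace.proj j : Vec d →L[ℝ] ℝ).hasFDerivAt

/-- integrability of bounded continuous functions -/
lemma int_bdd {d : ℕ} (P : Measure (Vec d)) [IsProbabilityMeasure P] (φ : Vec d → ℝ)
    (hc : Continuous φ) (M : ℝ) (hM : ∀ w, |φ w| ≤ M) (x : Vec d) :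
    Integrable (fun y => φ (x - y)) P :=
  Integrable.of_bound (hc.comp (continuous_const.sub continuous_id)).aestronglyMeasurable
      M (Filter.Eventually.of_forall fun y => by simpa using hM _)

lemma int_k {d : ℕ} (P : Measure (Vec d)) [IsProbabilityMeasure P] {s : ℝ} (hs : 0 < s)
    (x : Vec d) : Integrable (fun y => kk s (x - y)) P :=
  int_bdd P (kk s) (kk_cont s) 1
    (fun w => by rw [abs_of_pos (kk_pos s w)]; exact kk_le hs w) x

lemma int_kj {d : ℕ} (P : Measure (Vec d)) [IsProbabilityMeasure P] {s : ℝ} (hs : 0 < s)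
    (j : Fin d) (x : Vec d) : Integrable (fun y => kk s (x - y) * (x - y) j) P :=
  int_bdd P (fun w => kk s w * w j) (by fun_prop) (1 + 1 / s)
    (fun w => by
      rw [abs_mul, abs_of_pos (kk_pos s w)]
      exact (mul_le_mul_of_nonneg_left (abs_coord_le w j) (kk_pos s w).le).trans
        (kk_one_le hs w)) x

lemma int_kij {d : ℕ} (P : Measure (Vec d)) [IsProbabilityMeasure P] {s : ℝ} (hs : 0 < s)
    (i j : Fin d) (x : Vec d) :
    Integrable (fun y => kk s (x - y) * ((x - y) i * (x - y) j)) P :=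
  int_bdd P (fun w => kk s w * (w i * w j)) (by fun_prop) (1 / s)
    (fun w => by
      rw [abs_mul, abs_mul, abs_of_pos (kk_pos s w), le_div_iff₀ hs]
      refine le_trans ?_ (kk_sq_le hs w)
      rw [mul_comm, pow_two]
      exact mul_le_mul_of_nonneg_left (mul_le_mul_of_nonneg_left
        (mul_le_mul (abs_coord_le w i) (abs_coord_le w j) (abs_nonneg _) (norm_nonneg _))
        (kk_pos s w).le) hs.le) x

lemma int_ksq {d : ℕ} (P : Measure (Vec d)) [IsProbabilityMeasure P] {s : ℝ} (hs : 0 < s)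
    (x : Vec d) :
    Integrable (fun y => kk s (x - y) * ‖x - y‖ ^ 2) P :=
  int_bdd P (fun w => kk s w * ‖w‖ ^ 2) (by fun_prop) (1 / s)
    (fun w => by
      rw [abs_of_nonneg (mul_nonneg (kk_pos s w).le (sq_nonneg _)), le_div_iff₀ hs, mul_comm]
      exact kk_sq_le hs w) x

def FF {d : ℕ} (P : Measure (Vec d)) (s : ℝ) (x : Vec d) : ℝ := ∫ y, kk s (x - y) ∂P
def F1 {d : ℕ} (P : Measure (Vec d)) (s : ℝ) (j : Fin d) (x : Vec d) : ℝ :=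
  ∫ y, kk s (x - y) * (x - y) j ∂P
def F2 {d : ℕ} (P : Measure (Vec d)) (s : ℝ) (i j : Fin d) (x : Vec d) : ℝ :=
  ∫ y, kk s (x - y) * ((x - y) i * (x - y) j) ∂P

lemma FF_pos {d : ℕ} (P : Measure (Vec d)) [IsProbabilityMeasure P] {s : ℝ} (hs : 0 < s)
    (x : Vec d) : 0 < FF P s x :=
  integral_exp_pos (int_k P hs x)

lemma FF_deriv {d : ℕ} (P : Measure (Vec d)) [IsProbabilityMeasure P] {s : ℝ} (hs : 0 < s)
    (x : Vec d) : ∃ L : Vec d →L[ℝ] ℝ, HasFDerivAt (FF P s) L x ∧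
      ∀ j, L (EuclideanSpace.single j 1) = -2 * s * F1 P s j x := by
  have hc : Continuous (fun w : Vec d => (-2 * s * kk s w) • innerSL ℝ w) := by fun_prop
  have hb : ∀ w : Vec d, ‖(-2 * s * kk s w) • innerSL ℝ w‖ ≤ 2 * s * (1 + 1 / s) := fun w => by
    rw [norm_smul, innerSL_apply_norm, norm_mul, norm_mul, Real.norm_of_nonneg (kk_pos s w).le,
      Real.norm_of_nonneg hs.le, mul_assoc]
    simpa using mul_le_mul_of_nonneg_left (kk_one_le hs w) (by positivity : 0 ≤ 2 * s)
  refine ⟨_, aux_hasFDerivAt P (kk s) _ (kk_fderiv s) hc _ 1 hb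
    (fun w => by rw [abs_of_pos (kk_pos s w)]; exact kk_le hs w) x, fun j => ?_⟩
  rw [ContinuousLinearMap.integral_apply]
  · rw [F1, ← integral_const_mul]
    congr 1
    ext y
    simp [EuclideanSpace.inner_single_right]
    ring
  · exact Integrable.of_bound
      (hc.comp (continuous_const.sub continuous_id)).aestronglyMeasurable _
      (Filter.Eventually.of_forall fun y => hb _)

lemma F1_deriv {d : ℕ} (P : Measure (Vec d)) [IsProbabilityMeasure P] {s : ℝ} (hs : 0 < s)
    (j : Fin d) (x : Vec d) : ∃ L : Vec d →L[ℝ] ℝ, HasFDerivAt (F1 P s j) L x ∧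
      ∀ i, L (EuclideanSpace.single i 1) =
        (if i = j then FF P s x else 0) - 2 * s * F2 P s i j x := by
  have hc : Continuous (fun w : Vec d => kk s w • (EuclideanSpace.proj j : Vec d →L[ℝ] ℝ)
        + (w j) • ((-2 * s * kk s w) • innerSL ℝ w)) := by fun_prop
  have hb : ∀ w : Vec d, ‖kk s w • (EuclideanSpace.proj j : Vec d →L[ℝ] ℝ)
        + (w j) • ((-2 * s * kk s w) • innerSL ℝ w)‖ ≤ 3 := fun w => by
    have h1 : ‖kk s w • (EuclideanSpace.proj j : Vec d →L[ℝ] ℝ)‖ ≤ 1 := by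
      rw [norm_smul, Real.norm_of_nonneg (kk_pos s w).le]
      exact mul_le_one₀ (kk_le hs w) (norm_nonneg _) (norm_proj_le j)
    have h2 : ‖(w j) • ((-2 * s * kk s w) • innerSL ℝ w)‖ ≤ 2 := by
      rw [norm_smul, norm_smul, innerSL_apply_norm, norm_mul, norm_mul,
        Real.norm_of_nonneg (kk_pos s w).le, Real.norm_of_nonneg hs.le]
      have h3 := kk_sq_le hs w
      have h4 := abs_coord_le w j
      have h5 : 0 ≤ 2 * s * kk s w * ‖w‖ := by have := (kk_pos s w).le; positivity
      have := mul_le_mul_of_nonneg_right h4 h5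
      simp only [Real.norm_eq_abs, abs_neg, abs_two]
      nlinarith
    linarith [norm_add_le (kk s w • (EuclideanSpace.proj j : Vec d →L[ℝ] ℝ))
      ((w j) • ((-2 * s * kk s w) • innerSL ℝ w))]
  refine ⟨_, aux_hasFDerivAt P (fun w => kk s w * w j) _ (kkj_fderiv s j) hc _ (1 + 1 / s) hb
    (fun w => by
      rw [abs_mul, abs_of_pos (kk_pos s w)]
      exact (mul_le_mul_of_nonneg_left (abs_coord_le w j) (kk_pos s w).le).trans
        (kk_one_le hs w)) x, fun i => ?_⟩
  rw [ContinuousLinearMap.integral_apply]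
  · have : (if i = j then FF P s x else 0) = ∫ y, kk s (x - y) * (if i = j then 1 else 0) ∂P := by
      split_ifs <;> simp [FF]
    rw [this, F2, ← integral_const_mul, ← integral_sub ((int_k P hs x).mul_const _)
      ((int_kij P hs i j x).const_mul _)]
    congr 1
    ext y
    simp [EuclideanSpace.inner_single_right, eq_comm]
    ring
  · exact Integrable.of_bound
      (hc.comp (continuous_const.sub continuous_id)).aestronglyMeasurable _
      (Filter.Eventually.of_forall fun y => hb _)




lemma hess_eq {d : ℕ} (P : Measure (Vec d)) [IsProbabilityMeasure P] {s c : ℝ} (hs : 0 < s)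
    (hc : 0 < c) (i j : Fin d) (x : Vec d) :
    hessEntry (fun z => Real.log (c * FF P s z)) x i j =
      -2 * s * (((if i = j then FF P s x else 0) - 2 * s * F2 P s i j x) / FF P s x)
        - 4 * s ^ 2 * (F1 P s i x / FF P s x * (F1 P s j x / FF P s x)) := by
  have h1 : ∀ y, fderiv ℝ (fun z => Real.log (c * FF P s z)) y (EuclideanSpace.single j 1)
      = -2 * s * (F1 P s j y / FF P s y) := fun y => by
    obtain ⟨L, hL, hL'⟩ := FF_deriv P hs y
    have hp := FF_pos P hs y
    have := ((hL.const_mul c).log (mul_pos hc hp).ne').fderiv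
    rw [this]
    simp only [smul_apply, smul_eq_mul, hL']
    field_simp
  unfold hessEntry
  simp_rw [h1]
  obtain ⟨L, hL, hL'⟩ := FF_deriv P hs x
  obtain ⟨K, hK, hK'⟩ := F1_deriv P hs j x
  have hp := FF_pos P hs x
  have hI := (hasDerivAt_inv hp.ne').comp_hasFDerivAt x hL
  have := ((hK.mul hI).const_mul (-2 * s)).fderiv
  simp only [Function.comp_apply] at this
  simp_rw [div_eq_mul_inv (F1 P s j _)]
  erw [this]
  simp [hL', hK']
  field_simp
  ring

lemma cs_weight {α : Type*} [MeasurableSpace α] (P : Measure α) (k u v : α → ℝ)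
    (hk : ∀ y, 0 ≤ k y) (huu : Integrable (fun y => k y * (u y * u y)) P)
    (huv : Integrable (fun y => k y * (u y * v y)) P)
    (hvv : Integrable (fun y => k y * (v y * v y)) P) :
    (∫ y, k y * (u y * v y) ∂P) ^ 2 ≤
      (∫ y, k y * (u y * u y) ∂P) * (∫ y, k y * (v y * v y) ∂P) := by
  have h : ∀ t : ℝ, 0 ≤ (∫ y, k y * (u y * u y) ∂P) * (t * t)
      + (2 * ∫ y, k y * (u y * v y) ∂P) * t + ∫ y, k y * (v y * v y) ∂P := fun t => by
    have e : (∫ y, k y * (u y * u y) ∂P) * (t * t)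
      + (2 * ∫ y, k y * (u y * v y) ∂P) * t + ∫ y, k y * (v y * v y) ∂P
      = ∫ y, k y * (t * u y + v y) ^ 2 ∂P := by
      have : ∀ y, k y * (t * u y + v y) ^ 2 = (k y * (u y * u y)) * (t * t)
        + (k y * (u y * v y)) * (2 * t) + k y * (v y * v y) := fun y => by ring
      simp_rw [this]
      rw [integral_add (by exact (huu.mul_const _).add (huv.mul_const _)) hvv,
        integral_add (huu.mul_const _) (huv.mul_const _), integral_mul_const, integral_mul_const]
      ring
    rw [e]
    exact integral_nonneg fun y => mul_nonneg (hk y) (sq_nonneg _)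
  have := discrim_le_zero h
  rw [discrim] at this
  nlinarith

def MM {d : ℕ} (P : Measure (Vec d)) (s : ℝ) (x : Vec d) : ℝ :=
  (∫ y, kk s (x - y) * ‖x - y‖ ^ 2 ∂P) / FF P s x

lemma MM_eq {d : ℕ} (P : Measure (Vec d)) [IsProbabilityMeasure P] {s : ℝ} (hs : 0 < s)
    (x : Vec d) : MM P s x = ∑ i, F2 P s i i x / FF P s x := by
  rw [← Finset.sum_div, MM]
  congr 1
  unfold F2
  rw [← integral_finsetSum _ (fun i _ => int_kij P hs i i x)]
  congr 1
  ext y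
  rw [← Finset.mul_sum, EuclideanSpace.real_norm_sq_eq]
  congr 1
  refine Finset.sum_congr rfl fun i _ => by ring

lemma hess_entry_bound {d : ℕ} (P : Measure (Vec d)) [IsProbabilityMeasure P] {s c : ℝ}
    (hs : 0 < s) (hc : 0 < c) (i j : Fin d) (x : Vec d) :
    hessEntry (fun z => Real.log (c * FF P s z)) x i j ^ 2 ≤
      8 * s ^ 2 * (if i = j then 1 else 0)
        + 128 * s ^ 4 * ((F2 P s i i x / FF P s x) * (F2 P s j j x / FF P s x)) := by
  rw [hess_eq P hs hc]
  have hp := FF_pos P hs x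
  have h2 : F2 P s i j x ^ 2 ≤ F2 P s i i x * F2 P s j j x :=
    cs_weight P (fun y => kk s (x - y)) (fun y => (x - y) i) (fun y => (x - y) j)
      (fun y => (kk_pos _ _).le) (int_kij P hs i i x) (int_kij P hs i j x) (int_kij P hs j j x)
  have h1 : ∀ i, F1 P s i x ^ 2 ≤ F2 P s i i x * FF P s x := fun i => by
    have := cs_weight P (fun y => kk s (x - y)) (fun y => (x - y) i) (fun y => 1)
      (fun y => (kk_pos _ _).le) (int_kij P hs i i x) (by simpa using int_kj P hs i x)
      (by simpa using int_k P hs x)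
    simpa [F1, F2, FF] using this
  have h0 : ∀ i, 0 ≤ F2 P s i i x := fun i =>
    integral_nonneg fun y => mul_nonneg (kk_pos _ _).le (mul_self_nonneg _)
  have g2 : (F2 P s i j x / FF P s x) ^ 2 ≤
      (F2 P s i i x / FF P s x) * (F2 P s j j x / FF P s x) := by
    rw [div_pow, div_mul_div_comm, ← pow_two]
    gcongr
  have g1 : ∀ i, (F1 P s i x / FF P s x) ^ 2 ≤ F2 P s i i x / FF P s x := fun i => by
    rw [div_pow, div_le_div_iff₀ (by positivity) hp]
    nlinarith [h1 i]
  have g0 : ∀ i, 0 ≤ F2 P s i i x / FF P s x := fun i => div_nonneg (h0 i) hp.le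
  have g3 : ((F1 P s i x / FF P s x) * (F1 P s j x / FF P s x)) ^ 2 ≤
      (F2 P s i i x / FF P s x) * (F2 P s j j x / FF P s x) := by
    rw [mul_pow]
    exact mul_le_mul (g1 i) (g1 j) (sq_nonneg _) (g0 i)
  have e : ((if i = j then FF P s x else 0) - 2 * s * F2 P s i j x) / FF P s x
      = (if i = j then 1 else 0) - 2 * s * (F2 P s i j x / FF P s x) := by
    split_ifs
    · field_simp
    · field_simp
      ring
  rw [e]
  generalize (F2 P s i i x / FF P s x) * (F2 P s j j x / FF P s x) = Q at *
  generalize F2 P s i j x / FF P s x = A at *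
  generalize (F1 P s i x / FF P s x) * (F1 P s j x / FF P s x) = B at *
  have hδ : (if i = j then (1 : ℝ) else 0) = (if i = j then (1 : ℝ) else 0) ^ 2 := by
    split_ifs <;> simp
  rw [show 8 * s ^ 2 * (if i = j then (1 : ℝ) else 0) = 8 * s ^ 2 * (if i = j then (1 : ℝ) else 0) ^ 2
    by rw [← hδ]]
  generalize (if i = j then (1 : ℝ) else 0) = D at *
  have hAB : (A - B) ^ 2 ≤ 4 * Q := by nlinarith [sq_nonneg (A + B)]
  have hs4 : 0 ≤ s ^ 4 := by positivity
  have := mul_le_mul_of_nonneg_left hAB hs4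
  have hs2 := sq_nonneg (2 * s * D + 4 * s ^ 2 * (A - B))
  nlinarith

lemma hessFrob_bound {d : ℕ} (P : Measure (Vec d)) [IsProbabilityMeasure P] {s c : ℝ}
    (hs : 0 < s) (hc : 0 < c) (x : Vec d) :
    hessFrob (fun z => Real.log (c * FF P s z)) x ≤ 3 * s * d + 12 * s ^ 2 * MM P s x := by
  have hM : 0 ≤ MM P s x := div_nonneg
    (integral_nonneg fun y => mul_nonneg (kk_pos _ _).le (sq_nonneg _)) (FF_pos P hs x).le
  unfold hessFrob
  apply Real.sqrt_le_iff.2 ⟨by positivity, ?_⟩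
  have h1 : ∑ i, ∑ j, hessEntry (fun z => Real.log (c * FF P s z)) x i j ^ 2 ≤
      8 * s ^ 2 * d + 128 * s ^ 4 * MM P s x ^ 2 := by
    refine (Finset.sum_le_sum fun i _ => Finset.sum_le_sum fun j _ =>
      hess_entry_bound P hs hc i j x).trans (le_of_eq ?_)
    simp only [Finset.sum_add_distrib, ← Finset.mul_sum]
    rw [MM_eq P hs, pow_two (∑ i, _), Finset.sum_mul]
    simp
  have hd : (d : ℝ) ≤ (d : ℝ) ^ 2 := by exact_mod_cast Nat.le_self_pow two_ne_zero d
  have h3 : 0 ≤ s ^ 3 * d * MM P s x := by positivity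
  have h4 := mul_le_mul_of_nonneg_left hd (sq_nonneg s)
  have h5 : 0 ≤ s ^ 4 * MM P s x ^ 2 := by positivity
  have h6 : 0 ≤ s ^ 2 * (d : ℝ) ^ 2 := by positivity
  nlinarith

lemma jensen_kk {d : ℕ} (P : Measure (Vec d)) [IsProbabilityMeasure P] {s a : ℝ}
    (hs : 0 < s) (ha : a < s) (x : Vec d) :
    Real.exp (a * MM P s x) ≤ FF P (s - a) x / FF P s x := by
  have hp := FF_pos P hs x
  rw [le_div_iff₀ hp]
  set m := MM P s x with hm
  have hmm : ∫ y, kk s (x - y) * ‖x - y‖ ^ 2 ∂P = m * FF P s x := by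
    rw [hm, MM]; field_simp
  have h1 : ∀ y, Real.exp (a * m) * (kk s (x - y) * (1 - a * m)
      + a * (kk s (x - y) * ‖x - y‖ ^ 2)) ≤ kk (s - a) (x - y) := fun y => by
    have e : kk (s - a) (x - y) = kk s (x - y) * (Real.exp (a * m) *
        Real.exp (a * ‖x - y‖ ^ 2 - a * m)) := by
      unfold kk
      rw [← Real.exp_add, ← Real.exp_add]
      congr 1; ring
    rw [e]
    have h := Real.add_one_le_exp (a * ‖x - y‖ ^ 2 - a * m)
    have h2 : 0 ≤ kk s (x - y) * Real.exp (a * m) := mul_nonneg (kk_pos _ _).le (Real.exp_pos _).le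
    nlinarith [mul_le_mul_of_nonneg_left h h2]
  have i1 := ((int_k P hs x).mul_const (1 - a * m)).add ((int_ksq P hs x).const_mul a)
  have h2 := integral_mono (i1.const_mul (Real.exp (a * m))) (int_k P (sub_pos.2 ha) x) h1
  refine le_trans (le_of_eq ?_) h2
  simp only [Pi.add_apply]
  rw [integral_const_mul, integral_add ((int_k P hs x).mul_const (1 - a * m))
    ((int_ksq P hs x).const_mul a), integral_mul_const, integral_const_mul, hmm]
  change _ = Real.exp (a * m) * (FF P s x * (1 - a * m) + a * (m * FF P s x))
  ring

lemma FF_cont {d : ℕ} (P : Measure (Vec d)) [IsProbabilityMeasure P] {s : ℝ} (hs : 0 < s) :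
    Continuous (FF P s) :=
  continuous_iff_continuousAt.2 fun x => (FF_deriv P hs x).choose_spec.1.continuousAt



lemma lint_affine {d : ℕ} {σ : ℝ} (hσ : 0 < σ) (y : Vec d) (f : Vec d → ENNReal)
    (hf : Measurable f) :
    ∫⁻ z, f (y + σ • z) = ENNReal.ofReal (|(σ ^ d)⁻¹|) * ∫⁻ x, f x := by
  have h := Measure.map_addHaar_smul (volume : Measure (Vec d)) hσ.ne'
  rw [← lintegral_add_left_eq_self f y]
  have h2 := lintegral_map (μ := (volume : Measure (Vec d)))
    (f := fun x => f (y + x)) (g := fun z : Vec d => σ • z) (by fun_prop) (by fun_prop)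
  rw [← h2, h, lintegral_smul_measure]
  simp

lemma ofReal_FF {d : ℕ} (P : Measure (Vec d)) [IsProbabilityMeasure P] {s : ℝ} (hs : 0 < s)
    (x : Vec d) : ENNReal.ofReal (FF P s x) = ∫⁻ y, ENNReal.ofReal (kk s (x - y)) ∂P :=
  ofReal_integral_eq_lintegral_ofReal (int_k P hs x)
    (Filter.Eventually.of_forall fun y => (kk_pos _ _).le)

lemma law_ratio {d : ℕ} (P : Measure (Vec d)) [IsProbabilityMeasure P] {σ s s' : ℝ} (hσ : 0 < σ)
    (hs : s = 1 / (2 * σ ^ 2)) (hs' : 0 < s') :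
    ∫⁻ x, ENNReal.ofReal (FF P s' x / FF P s x) ∂(perturbLaw d P σ)
      = ENNReal.ofReal ((2 * s' * σ ^ 2) ^ (-(d : ℝ) / 2)) := by
  have hs0 : 0 < s := by rw [hs]; positivity
  set c : ℝ := (2 * π) ^ (-(d : ℝ) / 2) with hcdef
  have hc : 0 ≤ c := by positivity
  set J := ENNReal.ofReal (|(σ ^ d)⁻¹|) with hJ
  have c1 := FF_cont P hs0
  have c2 := FF_cont P hs'
  have hg : Measurable (fun x => ENNReal.ofReal (FF P s' x / FF P s x)) :=
    (c2.measurable.div c1.measurable).ennreal_ofReal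
  have mk : ∀ s : ℝ, Measurable (fun w : Vec d => kk s w) := fun s => (kk_cont s).measurable
  have hh : ∀ y : Vec d, ∫⁻ z, ENNReal.ofReal (FF P s' (y + σ • z) / FF P s (y + σ • z))
      ∂(volume.withDensity
      (fun x : Vec d => ENNReal.ofReal (c * Real.exp (-‖x‖ ^ 2 / 2))))
      = J * ∫⁻ x, ENNReal.ofReal c * (ENNReal.ofReal (kk s (x - y)) *
          ENNReal.ofReal (FF P s' x / FF P s x)) := fun y => by
    rw [hJ, ← lint_affine hσ y, lintegral_withDensity_eq_lintegral_mul]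
    · congr 1
      ext z
      rw [Pi.mul_apply, ENNReal.ofReal_mul hc, mul_assoc]
      congr 3
      simp only [add_sub_cancel_left, kk, norm_smul, hs]
      congr 1
      rw [Real.norm_of_nonneg hσ.le]
      field_simp
    · fun_prop
    · exact hg.comp (by fun_prop)
    · have := mk s
      exact ((this.comp (by fun_prop)).ennreal_ofReal.mul hg).const_mul _
  unfold perturbLaw
  rw [← hcdef, lintegral_map hg (by fun_prop), lintegral_prod _ (by
    exact (hg.comp (by fun_prop)).aemeasurable)]
  simp_rw [hh]
  have mA : Measurable (fun q : Vec d × Vec d => ENNReal.ofReal c *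
      (ENNReal.ofReal (kk s (q.2 - q.1)) * ENNReal.ofReal (FF P s' q.2 / FF P s q.2))) :=
    (((mk s).comp (by fun_prop)).ennreal_ofReal.mul (hg.comp measurable_snd)).const_mul _
  have mB : Measurable (fun q : Vec d × Vec d => ENNReal.ofReal c *
      ENNReal.ofReal (kk s' (q.2 - q.1))) :=
    ((mk s').comp (by fun_prop)).ennreal_ofReal.const_mul _
  rw [lintegral_const_mul _ (by exact mA.lintegral_prod_right'),
    lintegral_lintegral_swap (by exact mA.aemeasurable)]
  have step : ∀ x : Vec d, ∫⁻ y, ENNReal.ofReal c * (ENNReal.ofReal (kk s (x - y)) *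
          ENNReal.ofReal (FF P s' x / FF P s x)) ∂P
      = ∫⁻ y, ENNReal.ofReal c * ENNReal.ofReal (kk s' (x - y)) ∂P := fun x => by
    have m1 : ∀ s, Measurable (fun y => ENNReal.ofReal (kk s (x - y))) := fun s =>
      ((mk s).comp (by fun_prop)).ennreal_ofReal
    rw [lintegral_const_mul _ ((m1 s).mul_const _), lintegral_const_mul _ (m1 s'),
      lintegral_mul_const _ (m1 s), ← ofReal_FF P hs0, ← ofReal_FF P hs',
      ← ENNReal.ofReal_mul (FF_pos P hs0 x).le, mul_div_cancel₀ _ (FF_pos P hs0 x).ne']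
  simp_rw [step]
  rw [← lintegral_lintegral_swap (by exact mB.aemeasurable),
    ← lintegral_const_mul _ (by exact mB.lintegral_prod_right')]
  have fin : ∀ y : Vec d, J * ∫⁻ x, ENNReal.ofReal c * ENNReal.ofReal (kk s' (x - y))
      = ENNReal.ofReal ((2 * s' * σ ^ 2) ^ (-(d : ℝ) / 2)) := fun y => by
    rw [hJ, ← lint_affine hσ y _ (by exact ((mk s').comp (by fun_prop)).ennreal_ofReal.const_mul _),
      lintegral_const_mul _ (by exact ((mk s').comp (by fun_prop)).ennreal_ofReal)]
    have e : ∀ z : Vec d, kk s' (y + σ • z - y) = Real.exp (-(s' * σ ^ 2) * ‖z‖ ^ 2) := fun z => by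
      simp only [add_sub_cancel_left, kk, norm_smul]
      rw [Real.norm_of_nonneg hσ.le]
      congr 1; ring
    simp_rw [e]
    have hb : 0 < s' * σ ^ 2 := by positivity
    have hI := GaussianFourier.integral_rexp_neg_mul_sq_norm (V := Vec d) hb
    have hint : Integrable (fun z : Vec d => Real.exp (-(s' * σ ^ 2) * ‖z‖ ^ 2)) := by
      by_contra hn
      rw [integral_undef hn] at hI
      have : 0 < (π / (s' * σ ^ 2)) ^ (Module.finrank ℝ (Vec d) / 2 : ℝ) := by positivity
      linarith
    rw [← ofReal_integral_eq_lintegral_ofReal hint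
      (Filter.Eventually.of_forall fun y => (Real.exp_pos _).le), hI, ← ENNReal.ofReal_mul hc]
    congr 1
    rw [finrank_euclideanSpace_fin, hcdef, neg_div, Real.rpow_neg (by positivity),
      Real.rpow_neg (by positivity), ← Real.inv_rpow (by positivity),
      ← Real.inv_rpow (by positivity), ← Real.mul_rpow (by positivity) (by positivity)]
    congr 1
    field_simp
  simp_rw [fin]
  simp

lemma integral_le_of_lint {α : Type*} [MeasurableSpace α] (μ : Measure α) (f : α → ℝ)
    (hf : ∀ x, 0 ≤ f x) (B : ℝ) (hB : 0 ≤ B)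
    (h : ∫⁻ x, ENNReal.ofReal (f x) ∂μ ≤ ENNReal.ofReal B) : ∫ x, f x ∂μ ≤ B := by
  by_cases hm : AEStronglyMeasurable f μ
  · rw [integral_eq_lintegral_of_nonneg_ae (Filter.Eventually.of_forall hf) hm]
    exact ENNReal.toReal_le_of_le_ofReal hB h
  · rw [integral_non_aestronglyMeasurable hm]
    exact hB

lemma num_bound {d : ℕ} (hd : 1 ≤ d) :
    Real.exp (1 / 16) * (1 - 1 / (4 * (d : ℝ))) ^ (-(d : ℝ) / 2) ≤ 2 := by
  have hd' : (1 : ℝ) ≤ d := by exact_mod_cast hd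
  set u : ℝ := 1 / (4 * (d : ℝ)) with hu
  have hud : u * d = 1 / 4 := by rw [hu]; field_simp
  have hu0 : 0 < u := by positivity
  have hu1 : u ≤ 1 / 4 := by nlinarith
  have h1 : Real.exp (-(2 * u)) ≤ 1 - u := by
    rw [Real.exp_neg, inv_le_comm₀ (Real.exp_pos _) (by linarith)]
    have := Real.add_one_le_exp (2 * u)
    refine le_trans ?_ this
    rw [inv_le_iff_one_le_mul₀ (by linarith)]
    nlinarith
  have h2 : (1 - u) ^ (-(d : ℝ) / 2) ≤ Real.exp (1 / 4) := by
    refine (Real.rpow_le_rpow_of_nonpos (Real.exp_pos _) h1 (by linarith)).trans (le_of_eq ?_)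
    rw [← Real.exp_mul]
    congr 1
    nlinarith
  have h3 : Real.exp (1 / 16) * Real.exp (1 / 4) ≤ 2 := by
    rw [← Real.exp_add, ← Real.le_log_iff_exp_le (by norm_num)]
    have := Real.log_two_gt_d9
    norm_num at *
    linarith
  refine le_trans (mul_le_mul_of_nonneg_left h2 (Real.exp_pos _).le) h3



lemma exp_lint {d : ℕ} (hd : 1 ≤ d) (P : Measure (Vec d)) [IsProbabilityMeasure P] {σ : ℝ}
    (hσ : 0 < σ) :
    ∫⁻ x, ENNReal.ofReal (Real.exp (hessFrob (fun z => Real.log (perturbDensity d P σ z)) x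
      / (24 * d / σ ^ 2))) ∂(perturbLaw d P σ) ≤ ENNReal.ofReal 2 := by
  have hd' : (0 : ℝ) < d := by exact_mod_cast hd
  obtain ⟨s, hs⟩ : ∃ s, s = 1 / (2 * σ ^ 2) := ⟨_, rfl⟩
  have hs0 : 0 < s := by rw [hs]; positivity
  have e : perturbDensity d P σ = fun z => (2 * π * σ ^ 2) ^ (-(d : ℝ) / 2) * FF P s z := by
    ext z
    unfold perturbDensity FF kk
    congr 3
    ext y
    rw [hs]
    congr 1
    ring
  obtain ⟨a, ha⟩ : ∃ a : ℝ, a = s / (4 * d) := ⟨_, rfl⟩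
  have hd1 : (1 : ℝ) ≤ d := by exact_mod_cast hd
  have has : a < s := by
    rw [ha, div_lt_iff₀ (by positivity)]
    nlinarith
  have hb : ∀ x, Real.exp (hessFrob (fun z => Real.log (perturbDensity d P σ z)) x
      / (24 * d / σ ^ 2)) ≤ Real.exp (1 / 16) * (FF P (s - a) x / FF P s x) := fun x => by
    refine le_trans ?_ (mul_le_mul_of_nonneg_left (jensen_kk P hs0 has x) (Real.exp_pos _).le)
    rw [← Real.exp_add]
    apply Real.exp_le_exp.2
    rw [e]
    have h := hessFrob_bound P hs0 (c := (2 * π * σ ^ 2) ^ (-(d : ℝ) / 2)) (by positivity) x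
    rw [div_le_iff₀ (by positivity)]
    refine h.trans (le_of_eq ?_)
    rw [ha, hs]
    field_simp
    ring
  refine (lintegral_mono fun x => ENNReal.ofReal_le_ofReal (hb x)).trans ?_
  simp_rw [ENNReal.ofReal_mul (Real.exp_pos (1 / 16)).le]
  rw [lintegral_const_mul' _ _ ENNReal.ofReal_ne_top,
    law_ratio P hσ hs (sub_pos.2 has), ← ENNReal.ofReal_mul (Real.exp_pos _).le]
  apply ENNReal.ofReal_le_ofReal
  refine le_trans (le_of_eq ?_) (num_bound hd)
  congr 2
  rw [ha, hs]
  field_simp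

/-- Lemma `hessian-moment`: sub-exponential bound on the Frobenius norm of
the Hessian `∇²log p_σ` of a Gaussian perturbation. -/
theorem statement8 :
    ∃ C : ℝ, 0 < C ∧
      ∀ (d : ℕ) (σ : ℝ) (P : Measure (Vec d)),
        IsProbabilityMeasure P → 0 < σ →
        (∀ p : ℕ, 1 ≤ p →
          (∫ x, (hessFrob (fun z => Real.log (perturbDensity d P σ z)) x) ^ p
              ∂(perturbLaw d P σ)) ≤
            (C * p * d / σ ^ 2) ^ p) ∧
        psi1Norm (perturbLaw d P σ)
            (fun x => hessFrob (fun z => Real.log (perturbDensity d P σ z)) x) ≤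
          C * d / σ ^ 2 := by
  refine ⟨48, by norm_num, ?_⟩
  intro d σ P hP hσ
  have hbdd : ∀ f : Vec d → ℝ, BddBelow {t : ℝ | 0 < t ∧
      ∫ x, Real.exp (|f x| / t) ∂(perturbLaw d P σ) ≤ 2} := fun f => ⟨0, fun t ht => ht.1.le⟩
  have hf0 : ∀ x, 0 ≤ hessFrob (fun z => Real.log (perturbDensity d P σ z)) x := fun x =>
    Real.sqrt_nonneg _
  rcases Nat.eq_zero_or_pos d with rfl | hd
  · have hz : ∀ x, hessFrob (fun z => Real.log (perturbDensity 0 P σ z)) x = 0 := fun x => by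
      simp [hessFrob]
    constructor
    · intro p hp
      simp [hz, show p ≠ 0 by omega]
    · have hle : ∀ t : ℝ, 0 < t → psi1Norm (perturbLaw 0 P σ)
          (fun x => hessFrob (fun z => Real.log (perturbDensity 0 P σ z)) x) ≤ t := fun t ht => by
        refine csInf_le (hbdd _) ⟨ht, ?_⟩
        refine integral_le_of_lint _ _ (fun x => (Real.exp_pos _).le) 2 (by norm_num) ?_
        have h1 := law_ratio P hσ rfl (s' := 1 / (2 * σ ^ 2)) (by positivity)
        have hs0 : 0 < 1 / (2 * σ ^ 2) := by positivity
        simp_rw [div_self (FF_pos P hs0 _).ne'] at h1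
        simp only [hz, abs_zero, zero_div, Real.exp_zero]
        rw [h1]
        apply ENNReal.ofReal_le_ofReal
        norm_num
      simpa using le_of_forall_gt_imp_ge_of_dense hle
  · have hd' : (0 : ℝ) < d := by exact_mod_cast hd
    have hE := exp_lint hd P hσ
    obtain ⟨t, ht⟩ : ∃ t : ℝ, t = 24 * d / σ ^ 2 := ⟨_, rfl⟩
    rw [← ht] at hE
    have ht0 : 0 < t := by rw [ht]; positivity
    have ht2 : 48 * d / σ ^ 2 = 2 * t := by rw [ht]; ring
    constructor
    · intro p hp
      have hpp : (48 * p * d / σ ^ 2 : ℝ) = 2 * (p * t) := by rw [ht]; ring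
      rw [hpp]
      refine integral_le_of_lint _ _ (fun x => pow_nonneg (hf0 x) p) _ (by positivity) ?_
      have hb : ∀ x, hessFrob (fun z => Real.log (perturbDensity d P σ z)) x ^ p ≤
          (p.factorial * t ^ p) *
          Real.exp (hessFrob (fun z => Real.log (perturbDensity d P σ z)) x / t) := fun x => by
        have h := Real.pow_div_factorial_le_exp _ (div_nonneg (hf0 x) ht0.le) p
        rw [div_pow, div_div, div_le_iff₀ (by positivity)] at h
        linarith
      refine (lintegral_mono fun x => ENNReal.ofReal_le_ofReal (hb x)).trans ?_
      have hc : (0 : ℝ) ≤ p.factorial * t ^ p := by positivity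
      simp_rw [ENNReal.ofReal_mul hc]
      rw [lintegral_const_mul' _ _ ENNReal.ofReal_ne_top]
      refine (mul_le_mul_right hE _).trans ?_
      rw [← ENNReal.ofReal_mul hc]
      apply ENNReal.ofReal_le_ofReal
      rw [mul_pow, mul_pow]
      have h1 : (p.factorial : ℝ) ≤ (p : ℝ) ^ p := by exact_mod_cast Nat.factorial_le_pow p
      have h2 : (2 : ℝ) ≤ 2 ^ p := by
        simpa using pow_le_pow_right₀ (by norm_num : (1 : ℝ) ≤ 2) hp
      calc (p.factorial : ℝ) * t ^ p * 2 ≤ (p : ℝ) ^ p * t ^ p * 2 ^ p := by gcongr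
        _ = _ := by ring
    · rw [ht2]
      refine (csInf_le (hbdd _) (a := t) ⟨ht0, ?_⟩).trans (by linarith)
      refine integral_le_of_lint _ _ (fun x => (Real.exp_pos _).le) 2 (by norm_num) ?_
      simp_rw [abs_of_nonneg (hf0 _)]
      exact hE

end DiffusionKL
end
end
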